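/- Suppose 𝒴 = span(ℝ^N_0, Y_1,…,Y_R) is a finite-dimensional vector subspace of L^0(Ω,𝐅_T,P) with ℝ^N_0 ⊆ 𝒴, and NCA(𝒴) holds. Then for every f ∈ L^0(Ω,𝐅_T,P) and every φ ∈ L^0(Ω,𝐅_T,P) such that max{|f^i|, |Y^i_1|, …, |Y^i_R|} ≤ φ^i P-a.s. for every i, one has ℳ^φ_e(𝒴) ≠ ∅ and ρ^𝒴_+(f) = sup{Σ_{i=1}^N E_{Q^i}[f^i] : Q ∈ ℳ^φ_e(𝒴)} > −∞. Moreover, whenever ρ^𝒴_+(f) < +∞ the superhedging price ρ^𝒴_+(f) is attained. -/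

import Mathlib

open MeasureTheory Filter Topology

namespace CollectiveArb

variable {Ω : Type*}

/-- Terminal gains `K_i` of admissible (predictable) strategies for an agent with
filtration `F`, trading the assets indexed by `A`, over times `1,…,T`. -/
def gainsSet {J : ℕ} (F : ℕ → MeasurableSpace Ω) (T : ℕ)
    (A : Finset (Fin J)) (X : Fin J → ℕ → Ω → ℝ) : Set (Ω → ℝ) :=
  { g | ∃ H : Fin J → ℕ → Ω → ℝ,
      (∀ j ∈ A, ∀ s, 1 ≤ s → s ≤ T → Measurable[F (s - 1)] (H j s)) ∧
      g = fun ω => ∑ j ∈ A, ∑ s ∈ Finset.Icc 1 T, H j s ω * (X j s ω - X j (s - 1) ω) }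

/-- No collective arbitrage for the gains sets `K` and the exchange set `Y`:
`(K₁ × ⋯ × K_N + Y) ∩ L⁰₊ = {0}`. -/
def NCA {N : ℕ} [MeasurableSpace Ω] (P : Measure Ω)
    (K : Fin N → Set (Ω → ℝ)) (Y : Set (Fin N → Ω → ℝ)) : Prop :=
  ∀ k : Fin N → Ω → ℝ, ∀ y ∈ Y, (∀ i, k i ∈ K i) →
    (∀ i, ∀ᵐ ω ∂P, 0 ≤ k i ω + y i ω) →
    ∀ i, (fun ω => k i ω + y i ω) =ᵐ[P] fun _ => (0 : ℝ)

/-- `K^𝒴 = ⨉ᵢ (Kᵢ − L⁰₊(ℱᵢ_T)) + 𝒴`. -/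
def KY {N : ℕ} [MeasurableSpace Ω] (P : Measure Ω)
    (FT : Fin N → MeasurableSpace Ω)
    (K : Fin N → Set (Ω → ℝ)) (Y : Set (Fin N → Ω → ℝ)) : Set (Fin N → Ω → ℝ) :=
  { f | ∃ (k l y : Fin N → Ω → ℝ), y ∈ Y ∧ (∀ i, k i ∈ K i) ∧
      (∀ i, Measurable[FT i] (l i) ∧ (∀ᵐ ω ∂P, 0 ≤ l i ω)) ∧
      ∀ i, f i = fun ω => k i ω - l i ω + y i ω }

/-- `ℝ^N_0`: zero-sum deterministic exchanges, viewed as constant random vectors. -/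
def zeroSum (Ω : Type*) (N : ℕ) : Set (Fin N → Ω → ℝ) :=
  { y | ∃ x : Fin N → ℝ, (∑ i, x i) = 0 ∧ ∀ i, y i = fun _ => x i }

/-- `span(ℝ^N_0, Y_1, …, Y_R)`: the finite-dimensional space of exchanges generated
by `ℝ^N_0` and the random vectors `Ys 1, …, Ys R`. -/
def spanExch {N R : ℕ} (Ys : Fin R → Fin N → Ω → ℝ) : Set (Fin N → Ω → ℝ) :=
  { y | ∃ (x : Fin N → ℝ) (c : Fin R → ℝ), (∑ i, x i) = 0 ∧
      ∀ i, y i = fun ω => x i + ∑ r, c r * Ys r i ω }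

/-- `span(𝒴₀ ∪ {g})` for a vector subspace `𝒴₀`. -/
def spanWith {N : ℕ} (Y0 : Set (Fin N → Ω → ℝ)) (g : Fin N → Ω → ℝ) :
    Set (Fin N → Ω → ℝ) :=
  { y | ∃ w ∈ Y0, ∃ c : ℝ, ∀ i, y i = fun ω => w i ω + c * g i ω }

/-- Equivalent martingale measures `Mᵢₑ` for the assets in `A`, w.r.t. the filtration `F`. -/
def martMeasures {J : ℕ} [MeasurableSpace Ω] (P : Measure Ω)
    (F : ℕ → MeasurableSpace Ω) (T : ℕ) (A : Finset (Fin J))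
    (X : Fin J → ℕ → Ω → ℝ) : Set (Measure Ω) :=
  { Q | IsProbabilityMeasure Q ∧ Q ≪ P ∧ P ≪ Q ∧
      ∀ j ∈ A, (∀ t, t ≤ T → Integrable (X j t) Q) ∧
        ∀ s t, s ≤ t → t ≤ T → X j s =ᵐ[Q] Q[X j t | F s] }

/-- Equivalent collective martingale measures `ℳₑ(𝒴)`. -/
def MeY {J N : ℕ} [MeasurableSpace Ω] (P : Measure Ω)
    (F : Fin N → ℕ → MeasurableSpace Ω) (T : ℕ) (assets : Fin N → Finset (Fin J))
    (X : Fin J → ℕ → Ω → ℝ) (Y : Set (Fin N → Ω → ℝ)) : Set (Fin N → Measure Ω) :=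
  { Q | (∀ i, Q i ∈ martMeasures P (F i) T (assets i) X) ∧
      (∀ y ∈ Y, ∀ i, Integrable (y i) (Q i)) ∧
      ∀ y ∈ Y, (∑ i, ∫ ω, y i ω ∂(Q i)) ≤ 0 }

/-- `ℳ^φ_e(𝒴) = {Q ∈ ℳₑ(𝒴) : E_{Qⁱ}[|φⁱ|] < ∞ ∀ i}`. -/
def MeYphi {J N : ℕ} [MeasurableSpace Ω] (P : Measure Ω)
    (F : Fin N → ℕ → MeasurableSpace Ω) (T : ℕ) (assets : Fin N → Finset (Fin J))
    (X : Fin J → ℕ → Ω → ℝ) (Y : Set (Fin N → Ω → ℝ))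
    (φ : Fin N → Ω → ℝ) : Set (Fin N → Measure Ω) :=
  { Q | Q ∈ MeY P F T assets X Y ∧ ∀ i, Integrable (φ i) (Q i) }

/-- Closedness of a set of random vectors under componentwise `P`-a.s. convergence
of sequences (within `L⁰(Ω, 𝐅_T, P)`). -/
def ClosedAS {N : ℕ} [MeasurableSpace Ω] (P : Measure Ω)
    (FT : Fin N → MeasurableSpace Ω) (S : Set (Fin N → Ω → ℝ)) : Prop :=
  ∀ (f : ℕ → Fin N → Ω → ℝ) (g : Fin N → Ω → ℝ),
    (∀ n, f n ∈ S) → (∀ i, Measurable[FT i] (g i)) →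
    (∀ i, ∀ᵐ ω ∂P, Tendsto (fun n => f n i ω) atTop (𝓝 (g i ω))) →
    g ∈ S

/-- Collective superhedging price `ρ^𝒴₊(f)` (with `inf ∅ = +∞`). -/
noncomputable def rhoPlus {N : ℕ} [MeasurableSpace Ω] (P : Measure Ω)
    (K : Fin N → Set (Ω → ℝ)) (Y : Set (Fin N → Ω → ℝ))
    (f : Fin N → Ω → ℝ) : EReal :=
  sInf { z : EReal | ∃ m : Fin N → ℝ, z = ((∑ i, m i : ℝ) : EReal) ∧
      ∃ k : Fin N → Ω → ℝ, (∀ i, k i ∈ K i) ∧ ∃ y ∈ Y,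
        ∀ i, ∀ᵐ ω ∂P, f i ω ≤ m i + k i ω + y i ω }

/-- Collective subhedging price `ρ^𝒴₋(f)` (with `sup ∅ = −∞`). -/
noncomputable def rhoMinus {N : ℕ} [MeasurableSpace Ω] (P : Measure Ω)
    (K : Fin N → Set (Ω → ℝ)) (Y : Set (Fin N → Ω → ℝ))
    (f : Fin N → Ω → ℝ) : EReal :=
  sSup { z : EReal | ∃ m : Fin N → ℝ, z = ((∑ i, m i : ℝ) : EReal) ∧
      ∃ k : Fin N → Ω → ℝ, (∀ i, k i ∈ K i) ∧ ∃ y ∈ Y,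
        ∀ i, ∀ᵐ ω ∂P, m i + k i ω - y i ω ≤ f i ω }

/-- `ρ^𝒴₊(f)` is attained. -/
def rhoPlusAttained {N : ℕ} [MeasurableSpace Ω] (P : Measure Ω)
    (K : Fin N → Set (Ω → ℝ)) (Y : Set (Fin N → Ω → ℝ))
    (f : Fin N → Ω → ℝ) : Prop :=
  ∃ (m : Fin N → ℝ) (k y : Fin N → Ω → ℝ), y ∈ Y ∧ (∀ i, k i ∈ K i) ∧
    (∀ i, ∀ᵐ ω ∂P, f i ω ≤ m i + k i ω + y i ω) ∧
    rhoPlus P K Y f = ((∑ i, m i : ℝ) : EReal)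

/-- `ρ^𝒴₋(f)` is attained. -/
def rhoMinusAttained {N : ℕ} [MeasurableSpace Ω] (P : Measure Ω)
    (K : Fin N → Set (Ω → ℝ)) (Y : Set (Fin N → Ω → ℝ))
    (f : Fin N → Ω → ℝ) : Prop :=
  ∃ (m : Fin N → ℝ) (k y : Fin N → Ω → ℝ), y ∈ Y ∧ (∀ i, k i ∈ K i) ∧
    (∀ i, ∀ᵐ ω ∂P, m i + k i ω - y i ω ≤ f i ω) ∧
    rhoMinus P K Y f = ((∑ i, m i : ℝ) : EReal)

/-- `f` is `𝒴`-collectively replicable: `f ∈ ℝ^N + (K₁ × ⋯ × K_N) + 𝒴` in `L⁰`. -/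
def Replicable {N : ℕ} [MeasurableSpace Ω] (P : Measure Ω)
    (K : Fin N → Set (Ω → ℝ)) (Y : Set (Fin N → Ω → ℝ))
    (f : Fin N → Ω → ℝ) : Prop :=
  ∃ (m : Fin N → ℝ) (k y : Fin N → Ω → ℝ), y ∈ Y ∧ (∀ i, k i ∈ K i) ∧
    ∀ i, f i =ᵐ[P] fun ω => m i + k i ω + y i ω


section Abstract

variable {S : Type*}

/-- The gains from trading a single payoff `D` with `G`-measurable positions. -/
def dirGains (G : MeasurableSpace S) (D : S → ℝ) : Submodule ℝ (S → ℝ) where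
  carrier := { k | ∃ h : S → ℝ, Measurable[G] h ∧ k = h * D }
  zero_mem' := ⟨0, measurable_const, by simp⟩
  add_mem' := by
    rintro _ _ ⟨h, hh, rfl⟩ ⟨h', hh', rfl⟩
    exact ⟨h + h', hh.add hh', by ring⟩
  smul_mem' := by
    rintro c _ ⟨h, hh, rfl⟩
    exact ⟨c • h, hh.const_smul c, by rw [smul_mul_assoc]⟩

/-- The gains from trading successively the payoffs in a list, the position in each payoff being
measurable with respect to the paired σ-algebra. -/
def gains : List (MeasurableSpace S × (S → ℝ)) → Submodule ℝ (S → ℝ)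
  | [] => ⊥
  | a :: l => dirGains a.1 a.2 ⊔ gains l

theorem dirGains_le_gains {l : List (MeasurableSpace S × (S → ℝ))}
    {a : MeasurableSpace S × (S → ℝ)} (ha : a ∈ l) : dirGains a.1 a.2 ≤ gains l := by
  induction l with
  | nil => simp at ha
  | cons b l ih =>
    rcases List.mem_cons.1 ha with rfl | h
    · exact le_sup_left
    · exact (ih h).trans le_sup_right

theorem mul_mem_gains {l : List (MeasurableSpace S × (S → ℝ))} {G : MeasurableSpace S}
    {D h : S → ℝ} (ha : (G, D) ∈ l) (hh : Measurable[G] h) : h * D ∈ gains l :=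
  dirGains_le_gains ha ⟨h, hh, rfl⟩

theorem mem_gains {l : List (MeasurableSpace S × (S → ℝ))} {G : MeasurableSpace S}
    {D : S → ℝ} (ha : (G, D) ∈ l) : D ∈ gains l := by
  simpa using mul_mem_gains (h := 1) ha measurable_one

theorem gains_le {l : List (MeasurableSpace S × (S → ℝ))} {K : Submodule ℝ (S → ℝ)}
    (hK : ∀ a ∈ l, dirGains a.1 a.2 ≤ K) : gains l ≤ K := by
  induction l with
  | nil => exact bot_le
  | cons b l ih =>
    exact sup_le (hK b (by simp)) (ih fun a ha => hK a (by simp [ha]))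

/-- Stability of a space of random variables under `G`-measurable scaling and under pasting along
`G`-measurable countable partitions. -/
structure Stable (G : MeasurableSpace S) (K : Submodule ℝ (S → ℝ)) : Prop where
  mul : ∀ c : S → ℝ, Measurable[G] c → ∀ k ∈ K, c * k ∈ K
  paste : ∀ k : ℕ → S → ℝ, (∀ n, k n ∈ K) → ∀ τ : S → ℕ, Measurable[G] τ →
    (fun ω => k (τ ω) ω) ∈ K

theorem measurable_paste {G : MeasurableSpace S} {h : ℕ → S → ℝ} (hh : ∀ n, Measurable (h n))
    {τ : S → ℕ} (hτ : Measurable τ) : Measurable fun ω => h (τ ω) ω := by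
  have : Measurable (fun p : ℕ × S => h p.1 p.2) :=
    measurable_from_prod_countable_right fun n => hh n
  exact this.comp (hτ.prodMk measurable_id)

theorem stable_gains {G : MeasurableSpace S} {l : List (MeasurableSpace S × (S → ℝ))}
    (hG : ∀ a ∈ l, G ≤ a.1) : Stable G (gains l) := by
  induction l with
  | nil =>
    refine ⟨fun c _ k hk => ?_, fun k hk τ _ => ?_⟩
    · simp only [gains, Submodule.mem_bot] at hk ⊢
      simp [hk]
    · simp only [gains, Submodule.mem_bot] at hk ⊢
      ext ω
      simp [hk]
  | cons a l ih =>
    have hl := ih fun b hb => hG b (by simp [hb])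
    have ha := hG a (by simp)
    refine ⟨fun c hc k hk => ?_, fun k hk τ hτ => ?_⟩
    · obtain ⟨_, ⟨h, hh, rfl⟩, k', hk', rfl⟩ := Submodule.mem_sup.1 hk
      exact Submodule.mem_sup.2 ⟨c * h * a.2, ⟨c * h, (hc.mono ha le_rfl).mul hh, rfl⟩,
        c * k', hl.mul c hc k' hk', by ring⟩
    · have := fun n => Submodule.mem_sup.1 (hk n)
      choose d hd k' hk' hdk using this
      choose h hh hhd using hd
      refine Submodule.mem_sup.2 ⟨_, ⟨fun ω => h (τ ω) ω,
        measurable_paste hh (hτ.mono ha le_rfl), rfl⟩,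
        _, hl.paste k' hk' τ hτ, ?_⟩
      ext ω
      simp [← hdk, hhd]

theorem measurable_indicator_one_real {G : MeasurableSpace S} {A : Set S} (hA : MeasurableSet A) :
    Measurable (A.indicator (1 : S → ℝ)) := measurable_one.indicator hA

theorem exists_measurable_selection {G : MeasurableSpace S} {p : S → ℕ → Prop}
    (hp : ∀ ω, ∃ n, p ω n) (hm : ∀ n, MeasurableSet {ω | p ω n}) :
    ∃ τ : S → ℕ, Measurable τ ∧ ∀ ω, p ω (τ ω) := by
  classical
  exact ⟨fun ω => Nat.find (hp ω), measurable_find hp hm, fun ω => Nat.find_spec (hp ω)⟩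

theorem measurableSet_exploding {G : MeasurableSpace S} {h : ℕ → S → ℝ}
    (hh : ∀ n, Measurable (h n)) :
    MeasurableSet {ω | ∀ m : ℕ, ∃ n ≥ m, (m : ℝ) + 1 ≤ h n ω} := by
  have : {ω | ∀ m : ℕ, ∃ n ≥ m, (m : ℝ) + 1 ≤ h n ω} =
      ⋂ m : ℕ, ⋃ n : ℕ, ⋃ _ : m ≤ n, {ω | (m : ℝ) + 1 ≤ h n ω} := by
    ext ω; simp
  rw [this]
  exact MeasurableSet.iInter fun m => MeasurableSet.iUnion fun n =>
    MeasurableSet.iUnion fun _ => measurableSet_le measurable_const (hh n)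

theorem exists_exploding_selection {G : MeasurableSpace S} {h : ℕ → S → ℝ}
    (hh : ∀ n, Measurable (h n)) (m : ℕ) :
    ∃ τ : S → ℕ, Measurable τ ∧ ∀ ω, m ≤ τ ω ∧
      (ω ∈ {ω | ∀ m : ℕ, ∃ n ≥ m, (m : ℝ) + 1 ≤ h n ω} → (m : ℝ) + 1 ≤ h (τ ω) ω) := by
  have hAm := measurableSet_exploding hh
  set A : Set S := {ω | ∀ m : ℕ, ∃ n ≥ m, (m : ℝ) + 1 ≤ h n ω} with hA
  refine exists_measurable_selection
    (p := fun ω n => m ≤ n ∧ (ω ∈ A → (m : ℝ) + 1 ≤ h n ω)) (fun ω => ?_) (fun n => ?_)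
  · by_cases hω : ω ∈ A
    · obtain ⟨n, hn, hn'⟩ := hω m
      exact ⟨n, hn, fun _ => hn'⟩
    · exact ⟨m, le_rfl, fun h => absurd h hω⟩
  · have : {ω | m ≤ n ∧ (ω ∈ A → (m : ℝ) + 1 ≤ h n ω)} =
        {_ω | m ≤ n} ∩ (Aᶜ ∪ {ω | (m : ℝ) + 1 ≤ h n ω}) := by
      ext ω; simp [imp_iff_not_or]
    rw [this]
    exact (MeasurableSet.const _).inter
      (hAm.compl.union (measurableSet_le measurable_const (hh n)))

/-- A measurable Bolzano–Weierstrass theorem. -/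
theorem exists_convergent_selection {G : MeasurableSpace S} {u : ℕ → S → ℝ}
    (hu : ∀ n, Measurable (u n)) (hbdd : ∀ ω, ∃ C, ∀ᶠ n in atTop, |u n ω| ≤ C) :
    ∃ w : S → ℝ, Measurable w ∧ ∃ τ : ℕ → S → ℕ, (∀ m, Measurable (τ m)) ∧
      ∀ m ω, m ≤ τ m ω ∧ |u (τ m ω) ω - w ω| < 1 / ((m : ℝ) + 1) := by
  set w : S → ℝ := fun ω => limsup (fun n => u n ω) atTop with hw
  have hwm : Measurable w := Measurable.limsup hu
  have hclu : ∀ ω, ∀ m : ℕ, ∃ n, m ≤ n ∧ |u n ω - w ω| < 1 / ((m : ℝ) + 1) := by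
    intro ω m
    obtain ⟨C, hC⟩ := hbdd ω
    have hb : IsBoundedUnder (· ≤ ·) atTop (fun n => u n ω) :=
      ⟨C, eventually_map.2 (hC.mono fun n hn => (abs_le.1 hn).2)⟩
    have hb' : IsBoundedUnder (· ≥ ·) atTop (fun n => u n ω) :=
      ⟨-C, eventually_map.2 (hC.mono fun n hn => (abs_le.1 hn).1)⟩
    have hpos : 0 < 1 / ((m : ℝ) + 1) := by positivity
    have h1 : ∀ᶠ n in atTop, u n ω < w ω + 1 / ((m : ℝ) + 1) :=
      eventually_lt_of_limsup_lt (lt_add_of_pos_right _ hpos) hb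
    have h2 : ∃ᶠ n in atTop, w ω - 1 / ((m : ℝ) + 1) < u n ω :=
      frequently_lt_of_lt_limsup hb'.isCoboundedUnder_le (sub_lt_self _ hpos)
    obtain ⟨n, hn2, hn1, hnm⟩ := (h2.and_eventually (h1.and (eventually_ge_atTop m))).exists
    exact ⟨n, hnm, abs_lt.2 ⟨by linarith, by linarith⟩⟩
  have hsel : ∀ m : ℕ, ∃ τ : S → ℕ, Measurable τ ∧
      ∀ ω, m ≤ τ ω ∧ |u (τ ω) ω - w ω| < 1 / ((m : ℝ) + 1) := by
    intro m
    refine exists_measurable_selection (fun ω => hclu ω m) (fun n => ?_)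
    have : Measurable fun ω => |u n ω - w ω| :=
      continuous_abs.measurable.comp ((hu n).sub hwm)
    exact (MeasurableSet.const (m ≤ n)).inter (measurableSet_lt this measurable_const)
  choose τ hτ hτ' using hsel
  exact ⟨w, hwm, τ, hτ, hτ'⟩

/-- No nonzero nonnegative element of `K`, up to null sets. -/
def NoArb [MeasurableSpace S] (μ : Measure S) (K : Submodule ℝ (S → ℝ)) : Prop :=
  ∀ k ∈ K, 0 ≤ᵐ[μ] k → k =ᵐ[μ] 0

/-- The random variables which are almost surely dominated by an element of `K`. -/
def Dominated [MeasurableSpace S] (μ : Measure S) (K : Submodule ℝ (S → ℝ)) : Set (S → ℝ) :=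
  { g | ∃ k ∈ K, g ≤ᵐ[μ] k }

/-- Sequential closedness of the dominated random variables under almost sure convergence. -/
def SeqClosed [MeasurableSpace S] (μ : Measure S) (K : Submodule ℝ (S → ℝ)) : Prop :=
  ∀ (g : ℕ → S → ℝ) (g' : S → ℝ), (∀ n, g n ∈ Dominated μ K) →
    (∀ᵐ ω ∂μ, Tendsto (fun n => g n ω) atTop (𝓝 (g' ω))) → g' ∈ Dominated μ K

theorem NoArb.mono [MeasurableSpace S] {μ : Measure S} {K K' : Submodule ℝ (S → ℝ)} (h : K ≤ K')
    (hK : NoArb μ K') : NoArb μ K := fun k hk => hK k (h hk)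

/-- Where the positions in `D` explode upwards, `D` is redundant. -/
theorem exists_replication_of_unbounded {G m0 : MeasurableSpace S} {μ : Measure S} {D : S → ℝ}
    {K : Submodule ℝ (S → ℝ)} (hst : Stable G K) (hcl : SeqClosed μ K)
    (hNA : NoArb μ (dirGains G D ⊔ K)) {g : ℕ → S → ℝ} {g' : S → ℝ} {h k : ℕ → S → ℝ}
    (hh : ∀ n, Measurable[G] (h n)) (hk : ∀ n, k n ∈ K)
    (hle : ∀ n, g n ≤ᵐ[μ] h n * D + k n)
    (hlim : ∀ᵐ ω ∂μ, Tendsto (fun n => g n ω) atTop (𝓝 (g' ω))) :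
    ∃ k' ∈ K, ∀ᵐ ω ∂μ, (∀ m : ℕ, ∃ n ≥ m, (m : ℝ) + 1 ≤ h n ω) → D ω = k' ω := by
  classical
  set A : Set S := {ω | ∀ m : ℕ, ∃ n ≥ m, (m : ℝ) + 1 ≤ h n ω} with hA
  have hAm : MeasurableSet[G] A := measurableSet_exploding hh
  choose τ hτ hτ' using exists_exploding_selection hh
  set c : ℕ → S → ℝ := fun m => A.indicator fun ω => (h (τ m ω) ω)⁻¹ with hc
  have hcm : ∀ m, Measurable[G] (c m) := fun m =>
    (measurable_paste hh (hτ m)).inv.indicator hAm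
  have hle' : ∀ᵐ ω ∂μ, ∀ n, g n ω ≤ h n ω * D ω + k n ω := ae_all_iff.2 hle
  obtain ⟨k', hk', hk'le⟩ := hcl (fun m ω => c m ω * g (τ m ω) ω - A.indicator D ω)
    (fun ω => - A.indicator D ω) (fun m => ⟨_, hst.mul _ (hcm m) _ (hst.paste k hk _ (hτ m)), by
      filter_upwards [hle'] with ω hω
      by_cases hωA : ω ∈ A
      · have h1 := (hτ' m ω).2 hωA
        have h2 : 0 < h (τ m ω) ω := by linarith [(Nat.cast_nonneg m : (0:ℝ) ≤ m)]
        have := mul_le_mul_of_nonneg_left (hω (τ m ω)) (inv_pos.2 h2).le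
        simp only [hc, Set.indicator_of_mem hωA, Pi.mul_apply]
        rw [mul_add, ← mul_assoc, inv_mul_cancel₀ h2.ne'] at this
        linarith
      · simp [hc, hωA]⟩) (by
      filter_upwards [hlim] with ω hω
      have hτt : Tendsto (fun m => τ m ω) atTop atTop :=
        tendsto_atTop_mono (fun m => (hτ' m ω).1) tendsto_id
      have hg := hω.comp hτt
      have hct : Tendsto (fun m => c m ω) atTop (𝓝 0) := by
        by_cases hωA : ω ∈ A
        · simp only [hc, Set.indicator_of_mem hωA]
          refine tendsto_inv_atTop_zero.comp (tendsto_atTop_mono (fun m => ?_)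
            tendsto_natCast_atTop_atTop)
          linarith [(hτ' m ω).2 hωA]
        · simp [hc, hωA]
      simpa using (hct.mul hg).sub_const (A.indicator D ω))
  have h1A : Measurable[G] (A.indicator (1 : S → ℝ)) := measurable_indicator_one_real hAm
  have hzero := hNA (A.indicator 1 * D + A.indicator 1 * k')
    (Submodule.add_mem_sup ⟨_, h1A, rfl⟩ (hst.mul _ h1A _ hk')) (by
      filter_upwards [hk'le] with ω hω
      by_cases hωA : ω ∈ A
      · simp [hωA] at hω ⊢; linarith
      · simp [hωA])
  refine ⟨-k', K.neg_mem hk', ?_⟩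
  filter_upwards [hzero] with ω hω hωA
  have : ω ∈ A := hωA
  simp [this] at hω ⊢
  linarith

theorem seqClosed_sup_dirGains {G m0 : MeasurableSpace S} {μ : Measure S} {D : S → ℝ}
    {K : Submodule ℝ (S → ℝ)} (hst : Stable G K) (hcl : SeqClosed μ K)
    (hNA : NoArb μ (dirGains G D ⊔ K)) : SeqClosed μ (dirGains G D ⊔ K) := by
  classical
  intro g g' hg hlim
  have hdec : ∀ n, ∃ h k : S → ℝ, Measurable[G] h ∧ k ∈ K ∧ g n ≤ᵐ[μ] h * D + k := by
    intro n
    obtain ⟨_, hk, hle⟩ := hg n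
    obtain ⟨_, ⟨h, hh, rfl⟩, k', hk', rfl⟩ := Submodule.mem_sup.1 hk
    exact ⟨h, k', hh, hk', hle⟩
  choose h k hh hk hle using hdec
  have hneg : dirGains G (-D) ≤ dirGains G D := by
    rintro _ ⟨h, hh, rfl⟩
    exact ⟨-h, hh.neg, by ring⟩
  obtain ⟨k₁, hk₁, hk₁e⟩ := exists_replication_of_unbounded hst hcl hNA hh hk hle hlim
  obtain ⟨k₂, hk₂, hk₂e⟩ := exists_replication_of_unbounded (D := -D) (h := fun n => - h n)
    hst hcl (hNA.mono (sup_le_sup_right hneg K)) (fun n => (hh n).neg) hk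
    (fun n => by simpa using hle n) hlim
  set A : Set S := {ω | ∀ m : ℕ, ∃ n ≥ m, (m : ℝ) + 1 ≤ h n ω} with hA
  set A' : Set S := {ω | ∀ m : ℕ, ∃ n ≥ m, (m : ℝ) + 1 ≤ (-h n) ω} with hA'
  have hAm : MeasurableSet[G] A := measurableSet_exploding hh
  have hA'm : MeasurableSet[G] A' := measurableSet_exploding (fun n => (hh n).neg)
  have hBm : MeasurableSet[G] (A ∪ A') := hAm.union hA'm
  set B := A ∪ A' with hB
  set k₀ : S → ℝ := A.indicator 1 * k₁ + (A' \ A).indicator 1 * (-k₂) with hk₀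
  have hk₀K : k₀ ∈ K := K.add_mem (hst.mul _ (measurable_indicator_one_real hAm) _ hk₁)
    (hst.mul _ (measurable_indicator_one_real (hA'm.diff hAm)) _ (K.neg_mem hk₂))
  have hk₀e : ∀ᵐ ω ∂μ, ω ∈ B → D ω = k₀ ω := by
    filter_upwards [hk₁e, hk₂e] with ω h1 h2 hω
    by_cases hωA : ω ∈ A
    · simpa [hk₀, hωA] using h1 hωA
    · have hωA' : ω ∈ A' := hω.resolve_left hωA
      have := h2 hωA'
      simp only [Pi.neg_apply] at this
      simp [hk₀, hωA, hωA', ← this]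
  set u : ℕ → S → ℝ := fun n => Bᶜ.indicator (h n) with hu
  set v : ℕ → S → ℝ := fun n => k n + B.indicator (h n) * k₀ with hv
  have hum : ∀ n, Measurable[G] (u n) := fun n => (hh n).indicator hBm.compl
  have hvK : ∀ n, v n ∈ K := fun n =>
    K.add_mem (hk n) (hst.mul _ ((hh n).indicator hBm) _ hk₀K)
  have huv : ∀ᵐ ω ∂μ, ∀ n, g n ω ≤ u n ω * D ω + v n ω := by
    filter_upwards [ae_all_iff.2 hle, hk₀e] with ω hω hωe n
    have := hω n
    by_cases hωB : ω ∈ B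
    · simp only [Pi.add_apply, Pi.mul_apply] at this
      simp [hu, hv, hωB, ← hωe hωB]
      linarith
    · simpa [hu, hv, hωB] using this
  have hbdd : ∀ ω, ∃ C, ∀ᶠ n in atTop, |u n ω| ≤ C := by
    intro ω
    by_cases hωB : ω ∈ B
    · exact ⟨0, Eventually.of_forall fun n => by simp [hu, hωB]⟩
    · simp only [hB, Set.mem_union, hA, hA', Set.mem_ofPred_eq, not_or, not_forall, not_exists,
        not_and, not_le, Pi.neg_apply] at hωB
      obtain ⟨⟨m, hm⟩, m', hm'⟩ := hωB
      refine ⟨m + m' + 1, ?_⟩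
      filter_upwards [eventually_ge_atTop m, eventually_ge_atTop m'] with n hn hn'
      have h1 := hm n hn
      have h2 := hm' n hn'
      have : |u n ω| ≤ |h n ω| := by
        simp only [hu, Set.indicator]
        split_ifs <;> simp
      refine this.trans (abs_le.2 ⟨?_, ?_⟩) <;>
        linarith [(Nat.cast_nonneg m : (0:ℝ) ≤ m), (Nat.cast_nonneg m' : (0:ℝ) ≤ m')]
  obtain ⟨w, hwm, τ, hτ, hτ'⟩ := exists_convergent_selection hum hbdd
  obtain ⟨k', hk', hk'le⟩ := hcl (fun m ω => g (τ m ω) ω - u (τ m ω) ω * D ω)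
    (fun ω => g' ω - w ω * D ω) (fun m => ⟨_, hst.paste v hvK _ (hτ m), by
      filter_upwards [huv] with ω hω
      linarith [hω (τ m ω)]⟩) (by
      filter_upwards [hlim] with ω hω
      have hτt : Tendsto (fun m => τ m ω) atTop atTop :=
        tendsto_atTop_mono (fun m => (hτ' m ω).1) tendsto_id
      have hut : Tendsto (fun m => u (τ m ω) ω) atTop (𝓝 (w ω)) := by
        rw [tendsto_iff_dist_tendsto_zero]
        exact squeeze_zero (fun _ => dist_nonneg) (fun m => (hτ' m ω).2.le)
          tendsto_one_div_add_atTop_nhds_zero_nat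
      exact (hω.comp hτt).sub (hut.mul_const _))
  refine ⟨w * D + k', Submodule.add_mem_sup ⟨w, hwm, rfl⟩ hk', ?_⟩
  filter_upwards [hk'le] with ω hω
  simp only [Pi.add_apply, Pi.mul_apply]
  linarith

theorem seqClosed_gains [MeasurableSpace S] {μ : Measure S} {l : List (MeasurableSpace S × (S → ℝ))}
    (hl : l.Pairwise fun a b => a.1 ≤ b.1) (hNA : NoArb μ (gains l)) : SeqClosed μ (gains l) := by
  induction l with
  | nil =>
    intro g g' hg hlim
    refine ⟨0, Submodule.zero_mem _, ?_⟩
    have : ∀ n, g n ≤ᵐ[μ] 0 := by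
      intro n
      obtain ⟨k, hk, hle⟩ := hg n
      rwa [(Submodule.mem_bot ℝ).1 hk] at hle
    filter_upwards [ae_all_iff.2 this, hlim] with ω hω hωl
    exact le_of_tendsto' hωl hω
  | cons a l ih =>
    obtain ⟨ha, hl'⟩ := List.pairwise_cons.1 hl
    exact seqClosed_sup_dirGains (stable_gains ha) (ih hl' (hNA.mono le_sup_right)) hNA

end Abstract

section Separation

variable {S : Type*} [MeasurableSpace S] {μ : Measure S}
  {K : Submodule ℝ (S → ℝ)} {b : S → ℝ}

/-- The cone of square-integrable `u` for which `u * b` is dominated by an element of `K`. -/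
def dominatedCone (μ : Measure S) (K : Submodule ℝ (S → ℝ)) (b : S → ℝ) :
    PointedCone ℝ (Lp ℝ 2 μ) where
  carrier := { u | (fun ω => u ω * b ω) ∈ Dominated μ K }
  zero_mem' := ⟨0, K.zero_mem, by
    filter_upwards [Lp.coeFn_zero ℝ 2 μ] with ω hω
    have : (0 : Lp ℝ 2 μ) ω * b ω ≤ 0 := by
      rw [hω]; simp
    exact this⟩
  add_mem' := by
    rintro u v ⟨k, hk, hle⟩ ⟨k', hk', hle'⟩
    refine ⟨k + k', K.add_mem hk hk', ?_⟩
    filter_upwards [hle, hle', Lp.coeFn_add u v] with ω h1 h2 h3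
    rw [h3, Pi.add_apply, Pi.add_apply, add_mul]
    exact add_le_add h1 h2
  smul_mem' := by
    rintro ⟨c, hc⟩ u ⟨k, hk, hle⟩
    refine ⟨c • k, K.smul_mem c hk, ?_⟩
    filter_upwards [hle, Lp.coeFn_smul c u] with ω h1 h2
    have h3 : ((⟨c, hc⟩ : {r : ℝ // 0 ≤ r}) • u) = c • u := rfl
    rw [h3, h2, Pi.smul_apply, Pi.smul_apply, smul_eq_mul, smul_eq_mul, mul_assoc]
    exact mul_le_mul_of_nonneg_left h1 hc

theorem isClosed_dominatedCone (hcl : SeqClosed μ K) :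
    IsClosed (dominatedCone μ K b : Set (Lp ℝ 2 μ)) := by
  refine IsSeqClosed.isClosed fun u u' hu hlim => ?_
  obtain ⟨ns, -, hns⟩ := (tendstoInMeasure_of_tendsto_Lp hlim).exists_seq_tendsto_ae
  refine hcl (fun n ω => u (ns n) ω * b ω) _ (fun n => hu (ns n)) ?_
  filter_upwards [hns] with ω hω
  exact hω.mul_const _

/-- The polar of `dominatedCone`. -/
def polarSet (μ : Measure S) (K : Submodule ℝ (S → ℝ)) (b : S → ℝ) :
    Set (Lp ℝ 2 μ) :=
  { z | ∀ u ∈ dominatedCone μ K b, inner ℝ u z ≤ 0 }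

theorem add_mem_polarSet {z z' : Lp ℝ 2 μ} (hz : z ∈ polarSet μ K b) (hz' : z' ∈ polarSet μ K b) :
    z + z' ∈ polarSet μ K b := fun u hu => by
  rw [inner_add_right]
  exact add_nonpos (hz u hu) (hz' u hu)

theorem smul_mem_polarSet {z : Lp ℝ 2 μ} (hz : z ∈ polarSet μ K b) {c : ℝ} (hc : 0 ≤ c) :
    c • z ∈ polarSet μ K b := fun u hu => by
  rw [real_inner_smul_right]
  exact mul_nonpos_of_nonneg_of_nonpos hc (hz u hu)

theorem exists_mem_polarSet (hcl : SeqClosed μ K) {u : Lp ℝ 2 μ}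
    (hu : u ∉ dominatedCone μ K b) : ∃ z ∈ polarSet μ K b, 0 < inner ℝ u z := by
  let C : ProperCone ℝ (Lp ℝ 2 μ) := ⟨dominatedCone μ K b, isClosed_dominatedCone hcl⟩
  obtain ⟨y, hy, hy'⟩ := ProperCone.hyperplane_separation' C (x₀ := u) hu
  refine ⟨-y, fun v hv => ?_, ?_⟩
  · rw [inner_neg_right]
    linarith [hy v hv]
  · rw [inner_neg_right]
    linarith

theorem nonneg_of_mem_polarSet (hb : ∀ ω, 1 ≤ b ω) {z : Lp ℝ 2 μ} (hz : z ∈ polarSet μ K b) :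
    0 ≤ z := by
  have hinf := Lp.coeFn_inf z 0
  have hzero := Lp.coeFn_zero ℝ 2 μ
  have hmem : z ⊓ 0 ∈ dominatedCone μ K b := by
    refine ⟨0, K.zero_mem, ?_⟩
    filter_upwards [hinf, hzero] with ω h1 h2
    rw [h1]
    have : (z ω ⊓ (0 : Lp ℝ 2 μ) ω) ≤ 0 := by rw [h2]; exact inf_le_right
    exact mul_nonpos_of_nonpos_of_nonneg this (by linarith [hb ω])
  have h0 : inner ℝ (z ⊓ 0) (z ⊓ 0) = inner ℝ (z ⊓ 0) z := by
    rw [L2.inner_def, L2.inner_def]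
    refine integral_congr_ae ?_
    filter_upwards [hinf, hzero] with ω h1 h2
    simp only [h1, Pi.inf_apply, h2, Pi.zero_apply, RCLike.inner_apply, conj_trivial]
    rcases le_total (z ω) 0 with h | h <;> simp [h]
  have : z ⊓ 0 = 0 := by
    rw [← real_inner_self_nonpos]
    rw [h0]
    exact hz _ hmem
  exact inf_eq_right.1 this

theorem exists_pos_mem_polarSet [IsFiniteMeasure μ] (hb : ∀ ω, 1 ≤ b ω) (hcl : SeqClosed μ K) (hNA : NoArb μ K) :
    ∃ z ∈ polarSet μ K b, ∀ᵐ ω ∂μ, 0 < z ω := by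
  set V : Set ℝ := (fun z : Lp ℝ 2 μ => μ.real {ω | 0 < z ω}) '' polarSet μ K b with hV
  have hVne : V.Nonempty := ⟨_, 0, fun u _ => by simp, rfl⟩
  have hVb : BddAbove V := ⟨μ.real Set.univ, by
    rintro _ ⟨z, -, rfl⟩
    exact measureReal_mono (Set.subset_univ _)⟩
  obtain ⟨v, -, hvt, hvV⟩ := exists_seq_tendsto_sSup hVne hVb
  choose ζ hζ hζv using hvV
  set c : ℕ → ℝ := fun n => (1 / 2) ^ n / (1 + ‖ζ n‖) with hc
  have hcpos : ∀ n, 0 < c n := fun n => by positivity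
  have hsum : Summable fun n => c n • ζ n := by
    refine Summable.of_norm_bounded (g := fun n : ℕ => (1 / 2 : ℝ) ^ n)
      summable_geometric_two fun n => ?_
    rw [norm_smul, Real.norm_of_nonneg (hcpos n).le, hc, div_mul_eq_mul_div]
    refine div_le_of_le_mul₀ (by positivity) (by positivity) ?_
    exact mul_le_mul_of_nonneg_left (by linarith) (by positivity)
  have hcmem : ∀ n, c n • ζ n ∈ polarSet μ K b := fun n => smul_mem_polarSet (hζ n) (hcpos n).le
  set z := ∑' n, c n • ζ n with hz
  have hzmem : z ∈ polarSet μ K b := fun u hu => by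
    have : inner ℝ u z = ∑' n, inner ℝ u (c n • ζ n) := (innerSL ℝ u).map_tsum hsum
    rw [this]
    exact tsum_nonpos fun n => hcmem n u hu
  have hzle : ∀ n, c n • ζ n ≤ z := fun n =>
    hsum.le_tsum n fun j _ => nonneg_of_mem_polarSet hb (hcmem j)
  have hsup : sSup V ≤ μ.real {ω | 0 < z ω} := by
    refine le_of_tendsto' hvt fun n => ?_
    rw [← hζv n]
    refine ENNReal.toReal_mono (measure_ne_top _ _) (measure_mono_ae ?_)
    filter_upwards [(Lp.coeFn_le _ _).2 (hzle n), Lp.coeFn_smul (c n) (ζ n)] with ω h1 h2 h3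
    rw [h2] at h1
    exact lt_of_lt_of_le (mul_pos (hcpos n) h3) h1
  refine ⟨z, hzmem, ?_⟩
  set A : Set S := {ω | z ω ≤ 0} with hA
  have hAm : MeasurableSet A :=
    measurableSet_le (Lp.stronglyMeasurable z).measurable measurable_const
  have hzero : μ A = 0 := by
    by_contra hne
    set u := indicatorConstLp 2 hAm (measure_ne_top μ A) (1 : ℝ) with hu
    have hucoe : u =ᵐ[μ] A.indicator fun _ => (1 : ℝ) := indicatorConstLp_coeFn
    have hunot : u ∉ dominatedCone μ K b := by
      rintro ⟨k, hk, hle⟩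
      have hk0 := hNA k hk (by
        filter_upwards [hle, hucoe] with ω h1 h2
        refine le_trans ?_ h1
        rw [h2]
        exact mul_nonneg (Set.indicator_nonneg (fun _ _ => zero_le_one) _) (by linarith [hb ω]))
      refine hne ?_
      rw [measure_eq_zero_iff_ae_notMem]
      filter_upwards [hle, hucoe, hk0] with ω h1 h2 h3 hω
      rw [h2, h3, Set.indicator_of_mem hω] at h1
      simp only [one_mul, Pi.zero_apply] at h1
      linarith [hb ω]
    obtain ⟨z', hz', hpos⟩ := exists_mem_polarSet hcl hunot
    have hsub : {ω | 0 < z ω} ≤ᵐ[μ] {ω | 0 < (z + z') ω} := by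
      filter_upwards [Lp.coeFn_add z z', (Lp.coeFn_nonneg _).2 (nonneg_of_mem_polarSet hb hz')]
        with ω h1 h2 h3
      change 0 < (z + z') ω
      rw [h1]
      exact add_pos_of_pos_of_nonneg h3 h2
    have hge : μ {ω | 0 < (z + z') ω} ≤ μ {ω | 0 < z ω} := by
      rw [← ENNReal.toReal_le_toReal (measure_ne_top _ _) (measure_ne_top _ _)]
      exact (le_csSup hVb ⟨_, add_mem_polarSet hzmem hz', rfl⟩).trans hsup
    have hae := ae_eq_of_ae_subset_of_measure_ge hsub hge
      (measurableSet_lt measurable_const (Lp.stronglyMeasurable z).measurable).nullMeasurableSet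
      (measure_ne_top _ _)
    have : inner ℝ u z' ≤ 0 := by
      rw [L2.inner_def]
      refine integral_nonpos_of_ae ?_
      filter_upwards [hucoe, hae, Lp.coeFn_add z z',
        (Lp.coeFn_nonneg _).2 (nonneg_of_mem_polarSet hb hzmem)] with ω h1 h2 h3 h4
      rw [h1]
      by_cases hω : ω ∈ A
      · have h5 : ¬ 0 < (z + z') ω := fun h => not_lt.2 hω (h2.mpr h)
        rw [h3, Pi.add_apply, not_lt] at h5
        have h6 : 0 ≤ z ω := h4
        simp only [Set.indicator_of_mem hω, Pi.zero_apply, RCLike.inner_apply, conj_trivial]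
        linarith
      · simp [Set.indicator_of_notMem hω]
    linarith
  rw [measure_eq_zero_iff_ae_notMem] at hzero
  filter_upwards [hzero] with ω hω
  exact not_le.1 hω

/-- A Kreps–Yan type theorem: a random variable of growth at most `b` which is not dominated by an
element of `K` is separated from `K` by a strictly positive density. -/
theorem exists_separating_density [IsFiniteMeasure μ] (hcl : SeqClosed μ K) (hNA : NoArb μ K)
    (hb : Measurable b) (hb1 : ∀ ω, 1 ≤ b ω) {f : S → ℝ} (hf : Measurable f)
    (hfb : ∃ c, ∀ᵐ ω ∂μ, |f ω| ≤ c * b ω) (hfK : f ∉ Dominated μ K) :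
    ∃ d : S → ℝ, Measurable d ∧ (∀ ω, 0 < d ω) ∧ Integrable (fun ω => b ω * d ω) μ ∧
      (∀ g : S → ℝ, Measurable g → (∃ c, ∀ᵐ ω ∂μ, |g ω| ≤ c * b ω) → g ∈ Dominated μ K →
        ∫ ω, g ω * d ω ∂μ ≤ 0) ∧ 0 < ∫ ω, f ω * d ω ∂μ := by
  have hb0 : ∀ ω, 0 < b ω := fun ω => by linarith [hb1 ω]
  have hmem : ∀ g : S → ℝ, Measurable g → (∃ c, ∀ᵐ ω ∂μ, |g ω| ≤ c * b ω) →
      MemLp (fun ω => g ω / b ω) 2 μ := by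
    rintro g hg ⟨c, hc⟩
    refine MemLp.of_bound (hg.div hb).aestronglyMeasurable c ?_
    filter_upwards [hc] with ω hω
    rw [norm_div, Real.norm_eq_abs, Real.norm_of_nonneg (hb0 ω).le]
    exact (div_le_iff₀ (hb0 ω)).2 hω
  have hcone : ∀ g (hg : Measurable g) (hgb : ∃ c, ∀ᵐ ω ∂μ, |g ω| ≤ c * b ω),
      (hmem g hg hgb).toLp ∈ dominatedCone μ K b ↔ g ∈ Dominated μ K := by
    intro g hg hgb
    have : (fun ω => ((hmem g hg hgb).toLp _ : Lp ℝ 2 μ) ω * b ω) =ᵐ[μ] g := by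
      filter_upwards [(hmem g hg hgb).coeFn_toLp] with ω hω
      rw [hω, div_mul_cancel₀ _ (hb0 ω).ne']
    exact ⟨fun ⟨k, hk, hle⟩ => ⟨k, hk, this.symm.le.trans hle⟩,
      fun ⟨k, hk, hle⟩ => ⟨k, hk, this.le.trans hle⟩⟩
  set u := (hmem f hf hfb).toLp with hu
  obtain ⟨z₁, hz₁, hz₁u⟩ := exists_mem_polarSet hcl (fun h => hfK ((hcone f hf hfb).1 h))
  obtain ⟨z₀, hz₀, hz₀p⟩ := exists_pos_mem_polarSet hb1 hcl hNA
  set ε : ℝ := inner ℝ u z₁ / (2 * (1 + |inner ℝ u z₀|)) with hε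
  have hεpos : 0 < ε := by positivity
  set z := z₁ + ε • z₀ with hz
  have hzmem : z ∈ polarSet μ K b := add_mem_polarSet hz₁ (smul_mem_polarSet hz₀ hεpos.le)
  have hzu : 0 < inner ℝ u z := by
    rw [hz, inner_add_right, real_inner_smul_right]
    have h1 : ε * |inner ℝ u z₀| ≤ inner ℝ u z₁ / 2 := by
      rw [hε, div_mul_eq_mul_div, div_le_div_iff₀ (by positivity) (by positivity)]
      nlinarith [abs_nonneg (inner ℝ u z₀)]
    have h2 : ε * -|inner ℝ u z₀| ≤ ε * inner ℝ u z₀ :=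
      mul_le_mul_of_nonneg_left (neg_abs_le _) hεpos.le
    linarith
  have hzp : ∀ᵐ ω ∂μ, 0 < z ω := by
    filter_upwards [hz₀p, Lp.coeFn_add z₁ (ε • z₀), Lp.coeFn_smul ε z₀,
      (Lp.coeFn_nonneg _).2 (nonneg_of_mem_polarSet hb1 hz₁)] with ω h1 h2 h3 h4
    rw [h2, Pi.add_apply, h3]
    exact add_pos_of_nonneg_of_pos h4 (mul_pos hεpos h1)
  have hzm : Measurable z := (Lp.stronglyMeasurable z).measurable
  set z' : S → ℝ := fun ω => if 0 < z ω then z ω else 1 with hz'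
  have hz'm : Measurable z' :=
    Measurable.ite (measurableSet_lt measurable_const hzm) hzm measurable_const
  have hz'z : z' =ᵐ[μ] z := by
    filter_upwards [hzp] with ω hω
    simp [hz', hω]
  have hz'p : ∀ ω, 0 < z' ω := fun ω => by
    simp only [hz']
    split_ifs with h
    · exact h
    · exact one_pos
  have hint : ∀ g (hg : Measurable g) (hgb : ∃ c, ∀ᵐ ω ∂μ, |g ω| ≤ c * b ω),
      ∫ ω, g ω * (z' ω / b ω) ∂μ = inner ℝ (hmem g hg hgb).toLp z := by
    intro g hg hgb
    rw [L2.inner_def]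
    refine integral_congr_ae ?_
    filter_upwards [hz'z, (hmem g hg hgb).coeFn_toLp] with ω h1 h2
    rw [h1, h2]
    simp only [RCLike.inner_apply, conj_trivial]
    ring
  refine ⟨fun ω => z' ω / b ω, hz'm.div hb, fun ω => div_pos (hz'p ω) (hb0 ω), ?_, ?_, ?_⟩
  · refine Integrable.congr ((Lp.memLp z).integrable one_le_two) ?_
    filter_upwards [hz'z] with ω hω
    rw [mul_div_cancel₀ _ (hb0 ω).ne', hω]
  · intro g hg hgb hgK
    rw [hint g hg hgb]
    exact hzmem _ ((hcone g hg hgb).2 hgK)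
  · rw [hint f hf hfb]
    exact hzu

end Separation

section WeakDuality

variable {S : Type*}

theorem measurableSet_abs_le {G : MeasurableSpace S} {h : S → ℝ} (hh : Measurable h) (n : ℕ) :
    MeasurableSet {ω | |h ω| ≤ n} :=
  measurableSet_le (by fun_prop) measurable_const

/-- If every payoff in the list has vanishing integral against all bounded positions, then every
integrable random variable dominated by a gain has nonpositive integral. -/
theorem integral_nonpos_of_dominated [m0 : MeasurableSpace S] {Q : Measure S}
    {l : List (MeasurableSpace S × (S → ℝ))} (hl : l.Pairwise fun a b => a.1 ≤ b.1)
    (hle : ∀ a ∈ l, a.1 ≤ m0) (hint : ∀ a ∈ l, Integrable a.2 Q)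
    (hzero : ∀ a ∈ l, ∀ h : S → ℝ, Measurable[a.1] h → (∃ c, ∀ ω, |h ω| ≤ c) →
      ∫ ω, h ω * a.2 ω ∂Q = 0)
    {g : S → ℝ} (hg : Integrable g Q) (hgK : g ∈ Dominated Q (gains l)) : ∫ ω, g ω ∂Q ≤ 0 := by
  induction l generalizing g with
  | nil =>
    obtain ⟨k, hk, hgk⟩ := hgK
    simp only [gains, Submodule.mem_bot] at hk
    exact integral_nonpos_of_ae (hk ▸ hgk)
  | cons a l ih =>
    rw [List.pairwise_cons] at hl
    obtain ⟨k, hk, hgk⟩ := hgK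
    obtain ⟨_, ⟨h, hh, rfl⟩, k', hk', rfl⟩ := Submodule.mem_sup.1 hk
    have hB : ∀ n : ℕ, MeasurableSet[a.1] {ω | |h ω| ≤ n} := fun n => measurableSet_abs_le hh n
    have ha : a.1 ≤ m0 := hle a (by simp)
    have key : ∀ n : ℕ, ∫ ω in {ω | |h ω| ≤ n}, g ω ∂Q ≤ 0 := by
      intro n
      set B : Set S := {ω | |h ω| ≤ n} with hBdef
      have hone : Measurable[a.1] (B.indicator (1 : S → ℝ)) :=
        measurable_indicator_one_real (hB n)
      have hhB : Measurable[a.1] (B.indicator h) := hh.indicator (hB n)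
      have hbd : ∀ ω, |B.indicator h ω| ≤ n := by
        intro ω
        by_cases hω : ω ∈ B
        · rw [Set.indicator_of_mem hω]; exact hω
        · rw [Set.indicator_of_notMem hω]; simp
      have hI1 : Integrable (B.indicator g) Q := hg.indicator (ha _ (hB n))
      have hI2 : Integrable (fun ω => B.indicator h ω * a.2 ω) Q :=
        (hint a (by simp)).bdd_mul (hhB.mono ha le_rfl).aestronglyMeasurable
          (Eventually.of_forall hbd)
      have h0 := hzero a (by simp) _ hhB ⟨n, hbd⟩
      have hdom : (fun ω => B.indicator g ω - B.indicator h ω * a.2 ω) ∈ Dominated Q (gains l) := by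
        refine ⟨_, (stable_gains fun b hb => hl.1 b hb).mul _ hone k' hk', ?_⟩
        filter_upwards [hgk] with ω hω
        by_cases hωB : ω ∈ B
        · simp only [Set.indicator_of_mem hωB, Pi.mul_apply, Pi.one_apply, one_mul]
          simp only [Pi.add_apply, Pi.mul_apply] at hω
          linarith
        · simp [Set.indicator_of_notMem hωB]
      have := ih hl.2 (fun b hb => hle b (by simp [hb])) (fun b hb => hint b (by simp [hb]))
        (fun b hb => hzero b (by simp [hb])) (hI1.sub hI2) hdom
      rw [integral_sub' hI1 hI2, h0, sub_zero, integral_indicator (ha _ (hB n))] at this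
      exact this
    have hU : ⋃ n : ℕ, {ω | |h ω| ≤ n} = Set.univ := by
      ext ω
      simpa using exists_nat_ge |h ω|
    have hlim := tendsto_setIntegral_of_monotone (μ := Q) (f := g)
      (s := fun n : ℕ => {ω | |h ω| ≤ n}) (fun n => ha _ (hB n))
      (fun m n hmn ω (hω : |h ω| ≤ m) => hω.trans (Nat.cast_le.2 hmn)) hg.integrableOn
    rw [hU, setIntegral_univ] at hlim
    exact le_of_tendsto' hlim key

end WeakDuality

section Lift

variable {Ω : Type*} {N J R : ℕ}

/-- The σ-algebra on `Fin N × Ω` whose restriction to the copy of `Ω` indexed by `i` is `F i`. -/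
@[reducible] def liftSpace (F : Fin N → MeasurableSpace Ω) : MeasurableSpace (Fin N × Ω) :=
  ⨅ i, (F i).map (Prod.mk i)

theorem measurable_liftSpace_iff {F : Fin N → MeasurableSpace Ω} {h : Fin N × Ω → ℝ} :
    Measurable[liftSpace F] h ↔ ∀ i, Measurable[F i] fun ω => h (i, ω) := by
  constructor
  · intro hh i s hs
    have := hh hs
    rw [liftSpace, MeasurableSpace.measurableSet_iInf] at this
    exact this i
  · intro hh s hs
    rw [liftSpace, MeasurableSpace.measurableSet_iInf]
    exact fun i => hh i hs

theorem liftSpace_mono {F F' : Fin N → MeasurableSpace Ω} (h : ∀ i, F i ≤ F' i) :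
    liftSpace F ≤ liftSpace F' :=
  iInf_mono fun i => MeasurableSpace.map_mono (h i)

theorem liftSpace_le [m0 : MeasurableSpace Ω] {F : Fin N → MeasurableSpace Ω}
    (h : ∀ i, F i ≤ m0) : liftSpace F ≤ (inferInstance : MeasurableSpace (Fin N × Ω)) := by
  intro s hs
  rw [liftSpace, MeasurableSpace.measurableSet_iInf] at hs
  have : s = ⋃ i, {i} ×ˢ (Prod.mk i ⁻¹' s) := by
    ext ⟨i, ω⟩; simp
  rw [this]
  exact MeasurableSet.iUnion fun i => (measurableSet_singleton i).prod (h i _ (hs i))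

/-- The measure on `Fin N × Ω` whose restriction to the copy of `Ω` indexed by `i` is `Q i`. -/
noncomputable def liftMeasure [MeasurableSpace Ω] (Q : Fin N → Measure Ω) :
    Measure (Fin N × Ω) :=
  ∑ i, (Q i).map (Prod.mk i)

theorem ae_liftMeasure_iff [MeasurableSpace Ω] {Q : Fin N → Measure Ω} {p : Fin N × Ω → Prop} :
    (∀ᵐ x ∂liftMeasure Q, p x) ↔ ∀ i, ∀ᵐ ω ∂Q i, p (i, ω) := by
  rw [liftMeasure, ae_finsetSum_measure_iff]
  simp [(measurableEmbedding_prodMk_left _).ae_map_iff]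

theorem integrable_liftMeasure_iff [MeasurableSpace Ω] {Q : Fin N → Measure Ω}
    {h : Fin N × Ω → ℝ} :
    Integrable h (liftMeasure Q) ↔ ∀ i, Integrable (fun ω => h (i, ω)) (Q i) := by
  rw [liftMeasure, integrable_finsetSum_measure]
  simp [(measurableEmbedding_prodMk_left _).integrable_map_iff, Function.comp_def]

theorem integral_liftMeasure [MeasurableSpace Ω] {Q : Fin N → Measure Ω}
    {h : Fin N × Ω → ℝ} (hh : Integrable h (liftMeasure Q)) :
    ∫ x, h x ∂liftMeasure Q = ∑ i, ∫ ω, h (i, ω) ∂Q i := by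
  have hh' := hh
  rw [liftMeasure, integrable_finsetSum_measure] at hh'
  rw [liftMeasure, integral_finsetSum_measure hh']
  simp [(measurableEmbedding_prodMk_left _).integral_map]

instance [MeasurableSpace Ω] {Q : Fin N → Measure Ω} [∀ i, IsFiniteMeasure (Q i)] :
    IsFiniteMeasure (liftMeasure Q) := by
  unfold liftMeasure; infer_instance

/-- The price of asset `j` at time `t` for the agents trading it, and zero for the others. -/
def liftPrice (assets : Fin N → Finset (Fin J)) (X : Fin J → ℕ → Ω → ℝ) (j : Fin J) (t : ℕ) :
    Fin N × Ω → ℝ :=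
  fun p => if j ∈ assets p.1 then X j t p.2 else 0

/-- The transfer of one unit from agent `o` to agent `i`. -/
def transfer (Ω : Type*) (o i : Fin N) : Fin N × Ω → ℝ :=
  fun p => Pi.single (M := fun _ => ℝ) i 1 p.1 - Pi.single (M := fun _ => ℝ) o 1 p.1

/-- The list of all elementary trades on `Fin N × Ω`: the deterministic exchanges of transfers and
of the given random vectors, followed by the one-period trades in each asset. -/
def marketList (F : Fin N → ℕ → MeasurableSpace Ω) (T : ℕ) (assets : Fin N → Finset (Fin J))
    (X : Fin J → ℕ → Ω → ℝ) (Ys : Fin R → Fin N → Ω → ℝ) (o : Fin N) :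
    List (MeasurableSpace (Fin N × Ω) × (Fin N × Ω → ℝ)) :=
  ((List.finRange N).map fun i => (⊥, transfer Ω o i)) ++
  ((List.finRange R).map fun r => (⊥, fun p => Ys r p.1 p.2)) ++
  ((List.range T).flatMap fun s => (List.finRange J).map fun j =>
    (liftSpace fun i => F i s, liftPrice assets X j (s + 1) - liftPrice assets X j s))

variable {F : Fin N → ℕ → MeasurableSpace Ω} {T : ℕ} {assets : Fin N → Finset (Fin J)}
  {X : Fin J → ℕ → Ω → ℝ} {Ys : Fin R → Fin N → Ω → ℝ} {o : Fin N}

theorem mem_marketList_iff {a : MeasurableSpace (Fin N × Ω) × (Fin N × Ω → ℝ)} :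
    a ∈ marketList F T assets X Ys o ↔
      (∃ i, (⊥, transfer Ω o i) = a) ∨ (∃ r, (⊥, fun p => Ys r p.1 p.2) = a) ∨
      ∃ s < T, ∃ j, (liftSpace fun i => F i s,
        liftPrice assets X j (s + 1) - liftPrice assets X j s) = a := by
  simp [marketList]

theorem pairwise_marketList (hF : ∀ i, Monotone (F i)) :
    (marketList F T assets X Ys o).Pairwise fun a b => a.1 ≤ b.1 := by
  rw [marketList, List.pairwise_append, List.pairwise_append]
  refine ⟨⟨?_, ?_, ?_⟩, ?_, ?_⟩
  · rw [List.pairwise_map]; exact List.pairwise_of_forall fun _ _ => le_rfl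
  · rw [List.pairwise_map]; exact List.pairwise_of_forall fun _ _ => le_rfl
  · intro a ha b hb
    obtain ⟨i, -, rfl⟩ := List.mem_map.1 ha
    exact bot_le
  · rw [List.pairwise_flatMap]
    refine ⟨fun s _ => ?_, ?_⟩
    · rw [List.pairwise_map]; exact List.pairwise_of_forall fun _ _ => le_rfl
    · refine List.pairwise_lt_range.imp fun {s t} hst a ha b hb => ?_
      obtain ⟨j, -, rfl⟩ := List.mem_map.1 ha
      obtain ⟨j', -, rfl⟩ := List.mem_map.1 hb
      exact liftSpace_mono fun i => hF i hst.le
  · intro a ha b hb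
    rcases List.mem_append.1 ha with ha | ha
    · obtain ⟨i, -, rfl⟩ := List.mem_map.1 ha
      exact bot_le
    · obtain ⟨i, -, rfl⟩ := List.mem_map.1 ha
      exact bot_le

theorem add_mem_gainsSet {G : ℕ → MeasurableSpace Ω} {A : Finset (Fin J)} {k k' : Ω → ℝ}
    (hk : k ∈ gainsSet G T A X) (hk' : k' ∈ gainsSet G T A X) :
    k + k' ∈ gainsSet G T A X := by
  obtain ⟨H, hH, rfl⟩ := hk
  obtain ⟨H', hH', rfl⟩ := hk'
  refine ⟨H + H', fun j hj s hs hsT => (hH j hj s hs hsT).add (hH' j hj s hs hsT), ?_⟩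
  ext ω
  simp only [Pi.add_apply, add_mul, Finset.sum_add_distrib]

theorem smul_mem_gainsSet {G : ℕ → MeasurableSpace Ω} {A : Finset (Fin J)} {k : Ω → ℝ} (c : ℝ)
    (hk : k ∈ gainsSet G T A X) : c • k ∈ gainsSet G T A X := by
  obtain ⟨H, hH, rfl⟩ := hk
  refine ⟨c • H, fun j hj s hs hsT => (hH j hj s hs hsT).const_smul c, ?_⟩
  ext ω
  simp only [Pi.smul_apply, smul_eq_mul, Finset.mul_sum, mul_assoc]

theorem zero_mem_gainsSet {G : ℕ → MeasurableSpace Ω} {A : Finset (Fin J)} :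
    0 ∈ gainsSet G T A X :=
  ⟨0, fun _ _ _ _ _ => measurable_const, by ext; simp⟩

theorem mul_mem_gainsSet {G : ℕ → MeasurableSpace Ω} {A : Finset (Fin J)} {j : Fin J} {s : ℕ}
    (hj : j ∈ A) (hs : s < T) {h : Ω → ℝ} (hh : Measurable[G s] h) :
    (fun ω => h ω * (X j (s + 1) ω - X j s ω)) ∈ gainsSet G T A X := by
  classical
  refine ⟨fun j' s' => if j' = j ∧ s' = s + 1 then h else 0, fun j' _ s' _ _ => ?_, ?_⟩
  · by_cases hc : j' = j ∧ s' = s + 1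
    · obtain ⟨rfl, rfl⟩ := hc
      simpa using hh
    · simp only [if_neg hc]; exact measurable_const
  · ext ω
    rw [Finset.sum_eq_single_of_mem j hj, Finset.sum_eq_single_of_mem (s + 1)]
    · simp
    · simp; lia
    · intro b _ hb; simp [hb]
    · intro b _ hb; simp [hb]

theorem zero_mem_spanExch : 0 ∈ spanExch Ys := ⟨0, 0, by simp, fun i => by ext; simp⟩

theorem add_mem_spanExch {y y' : Fin N → Ω → ℝ} (hy : y ∈ spanExch Ys) (hy' : y' ∈ spanExch Ys) :
    y + y' ∈ spanExch Ys := by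
  obtain ⟨x, c, hx, hy⟩ := hy
  obtain ⟨x', c', hx', hy'⟩ := hy'
  refine ⟨x + x', c + c', by simp [Finset.sum_add_distrib, hx, hx'], fun i => ?_⟩
  ext ω
  simp only [Pi.add_apply, hy, hy', add_mul, Finset.sum_add_distrib]
  ring

theorem smul_mem_spanExch {y : Fin N → Ω → ℝ} (a : ℝ) (hy : y ∈ spanExch Ys) :
    a • y ∈ spanExch Ys := by
  obtain ⟨x, c, hx, hy⟩ := hy
  refine ⟨a • x, a • c, by simp [← Finset.mul_sum, hx], fun i => ?_⟩
  ext ω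
  simp only [Pi.smul_apply, smul_eq_mul, hy, mul_add, Finset.mul_sum, mul_assoc]

/-- The sums of individual gains and exchanges, as functions on `Fin N × Ω`. -/
def collectiveGains (F : Fin N → ℕ → MeasurableSpace Ω) (T : ℕ) (assets : Fin N → Finset (Fin J))
    (X : Fin J → ℕ → Ω → ℝ) (Ys : Fin R → Fin N → Ω → ℝ) : Submodule ℝ (Fin N × Ω → ℝ) where
  carrier := { g | ∃ k : Fin N → Ω → ℝ, (∀ i, k i ∈ gainsSet (F i) T (assets i) X) ∧
    ∃ y ∈ spanExch Ys, ∀ i ω, g (i, ω) = k i ω + y i ω }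
  zero_mem' := ⟨0, fun _ => zero_mem_gainsSet, 0, zero_mem_spanExch, by simp⟩
  add_mem' := by
    rintro g g' ⟨k, hk, y, hy, h⟩ ⟨k', hk', y', hy', h'⟩
    refine ⟨k + k', fun i => add_mem_gainsSet (hk i) (hk' i), y + y', add_mem_spanExch hy hy',
      fun i ω => ?_⟩
    simp only [Pi.add_apply, h, h']
    ring
  smul_mem' := by
    rintro c g ⟨k, hk, y, hy, h⟩
    refine ⟨c • k, fun i => smul_mem_gainsSet c (hk i), c • y, smul_mem_spanExch c hy,
      fun i ω => ?_⟩
    simp only [Pi.smul_apply, smul_eq_mul, h]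
    ring

theorem transfer_mem_spanExch (i : Fin N) :
    (fun i' ω => transfer Ω o i (i', ω)) ∈ spanExch Ys :=
  ⟨fun i' => Pi.single (M := fun _ => ℝ) i 1 i' - Pi.single (M := fun _ => ℝ) o 1 i', 0,
    by simp, fun i' => by ext; simp [transfer]⟩

theorem exchange_mem_spanExch (r : Fin R) : Ys r ∈ spanExch Ys := by
  refine ⟨0, Pi.single r 1, by simp, fun i => ?_⟩
  ext ω
  simp [Pi.single_apply]

theorem mem_collectiveGains_of_mem_spanExch {y : Fin N → Ω → ℝ} (hy : y ∈ spanExch Ys) :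
    (fun p => y p.1 p.2) ∈ collectiveGains F T assets X Ys :=
  ⟨0, fun _ => zero_mem_gainsSet, y, hy, by simp⟩

theorem trade_mem_collectiveGains {s : ℕ} (hs : s < T) (j : Fin J) {h : Fin N × Ω → ℝ}
    (hh : Measurable[liftSpace fun i => F i s] h) :
    h * (liftPrice assets X j (s + 1) - liftPrice assets X j s) ∈
      collectiveGains F T assets X Ys := by
  rw [measurable_liftSpace_iff] at hh
  refine ⟨fun i => if j ∈ assets i then fun ω => h (i, ω) * (X j (s + 1) ω - X j s ω) else 0,
    fun i => ?_, 0, zero_mem_spanExch, fun i ω => ?_⟩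
  · by_cases hj : j ∈ assets i
    · simpa [hj] using mul_mem_gainsSet hj hs (hh i)
    · simpa [hj] using zero_mem_gainsSet
  · by_cases hj : j ∈ assets i <;> simp [hj, liftPrice]

theorem sum_smul_transfer_apply {x : Fin N → ℝ} (hx : ∑ i, x i = 0) (i : Fin N) (ω : Ω) :
    ∑ i', x i' * transfer Ω o i' (i, ω) = x i := by
  simp [transfer, mul_sub, Finset.sum_sub_distrib, hx, Pi.single_apply]

theorem sum_Icc_one_eq_sum_range (u : ℕ → ℝ) (T : ℕ) :
    ∑ s ∈ Finset.Icc 1 T, u s = ∑ s ∈ Finset.range T, u (s + 1) := by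
  rw [Finset.range_eq_Ico, Finset.sum_Ico_add', ← Finset.Ico_add_one_right_eq_Icc, zero_add]

theorem gains_marketList :
    gains (marketList F T assets X Ys o) = collectiveGains F T assets X Ys := by
  refine le_antisymm (gains_le fun a ha => ?_) ?_
  · rintro _ ⟨h, hh, rfl⟩
    obtain ⟨i, rfl⟩ | ⟨r, rfl⟩ | ⟨s, hs, j, rfl⟩ := mem_marketList_iff.1 ha
    · obtain ⟨c, rfl⟩ := eq_const_of_measurable_bot hh
      exact Submodule.smul_mem _ c 
        (mem_collectiveGains_of_mem_spanExch (transfer_mem_spanExch i))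
    · obtain ⟨c, rfl⟩ := eq_const_of_measurable_bot hh
      exact Submodule.smul_mem _ c 
        (mem_collectiveGains_of_mem_spanExch (exchange_mem_spanExch r))
    · exact trade_mem_collectiveGains hs j hh
  · rintro g ⟨k, hk, y, ⟨x, c, hx, hy⟩, hg⟩
    choose H hH hkH using hk
    have e : g = (∑ j, ∑ s ∈ Finset.range T,
        (fun p : Fin N × Ω => if j ∈ assets p.1 then H p.1 j (s + 1) p.2 else 0) *
          (liftPrice assets X j (s + 1) - liftPrice assets X j s)) +
        (∑ i, x i • transfer Ω o i) + ∑ r, c r • fun p : Fin N × Ω => Ys r p.1 p.2 := by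
      ext ⟨i, ω⟩
      rw [hg, hkH, hy]
      simp only [Pi.add_apply, Finset.sum_apply, Pi.mul_apply, Pi.smul_apply, smul_eq_mul,
        Pi.sub_apply, sum_smul_transfer_apply hx, sum_Icc_one_eq_sum_range, liftPrice,
        Nat.add_sub_cancel, add_assoc, add_left_inj]
      rw [← Finset.sum_subset (Finset.subset_univ (assets i))]
      · exact Finset.sum_congr rfl fun j hj => by simp [hj]
      · intro j _ hj
        simp [hj]
    rw [e]
    refine Submodule.add_mem _ (Submodule.add_mem _ (Submodule.sum_mem _ fun j _ =>
      Submodule.sum_mem _ fun s hs => mul_mem_gains (G := liftSpace fun i => F i s)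
        (mem_marketList_iff.2 (Or.inr (Or.inr ⟨s, Finset.mem_range.1 hs, j, rfl⟩))) ?_)
      (Submodule.sum_mem _ fun i _ => Submodule.smul_mem _ _ ?_))
      (Submodule.sum_mem _ fun r _ => Submodule.smul_mem _ _ ?_)
    · rw [measurable_liftSpace_iff]
      intro i
      by_cases hj : j ∈ assets i
      · simpa [hj] using hH i j hj (s + 1) (by lia) (by have := Finset.mem_range.1 hs; lia)
      · simp [hj]
    · exact mem_gains (mem_marketList_iff.2 (Or.inl ⟨i, rfl⟩))
    · exact mem_gains (mem_marketList_iff.2 (Or.inr (Or.inl ⟨r, rfl⟩)))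

end Lift

section Martingale

variable {Ω : Type*} {G m0 : MeasurableSpace Ω} {Q : Measure Ω} {u v h : Ω → ℝ}

theorem integral_mul_sub_eq_zero_of_condExp [IsFiniteMeasure Q] (hG : G ≤ m0)
    (hu : Integrable u Q) (hv : Integrable v Q) (huv : u =ᵐ[Q] Q[v | G]) (hh : Measurable[G] h)
    (hhb : ∃ c, ∀ ω, |h ω| ≤ c) : ∫ ω, h ω * (v ω - u ω) ∂Q = 0 := by
  obtain ⟨c, hc⟩ := hhb
  have hhm : AEStronglyMeasurable h Q := (hh.mono hG le_rfl).aestronglyMeasurable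
  have hhu : Integrable (fun ω => h ω * u ω) Q := hu.bdd_mul hhm (Eventually.of_forall hc)
  have hhv : Integrable (fun ω => h ω * v ω) Q := hv.bdd_mul hhm (Eventually.of_forall hc)
  simp only [mul_sub]
  rw [integral_sub hhv hhu, sub_eq_zero, ← integral_condExp hG]
  refine integral_congr_ae ?_
  have := condExp_mul_of_stronglyMeasurable_left (m := G) hh.stronglyMeasurable hhv hv
  filter_upwards [huv, this] with ω h1 h2
  rw [h1]
  exact h2

theorem ae_eq_condExp_of_forall_step {F : ℕ → MeasurableSpace Ω} {T : ℕ} {X : ℕ → Ω → ℝ}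
    [IsFiniteMeasure Q] (hF : Monotone F) (hFle : ∀ t, F t ≤ m0)
    (hX : ∀ t ≤ T, Measurable[F t] (X t)) (hint : ∀ t ≤ T, Integrable (X t) Q)
    (hstep : ∀ s < T, ∀ A, MeasurableSet[F s] A →
      ∫ ω, A.indicator (1 : Ω → ℝ) ω * (X (s + 1) ω - X s ω) ∂Q = 0)
    {s t : ℕ} (hst : s ≤ t) (ht : t ≤ T) : X s =ᵐ[Q] Q[X t | F s] := by
  refine ae_eq_condExp_of_forall_setIntegral_eq (hFle s) (hint t ht)
    (fun A _ _ => (hint s (hst.trans ht)).integrableOn) (fun A hA _ => ?_)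
    (hX s (hst.trans ht)).stronglyMeasurable.aestronglyMeasurable
  induction t, hst using Nat.le_induction with
  | base => rfl
  | succ t hst ih =>
    rw [ih (by lia)]
    have hA' := hF hst _ hA
    have h0 := hstep t (by lia) A hA'
    have e : (fun ω => A.indicator (1 : Ω → ℝ) ω * (X (t + 1) ω - X t ω)) =
        A.indicator (X (t + 1) - X t) := by
      ext ω
      by_cases hω : ω ∈ A <;> simp [hω]
    rw [e, integral_indicator (hFle t _ hA'), integral_sub' (hint _ ht).integrableOn
      (hint t (by lia)).integrableOn, sub_eq_zero] at h0
    exact h0.symm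

end Martingale

section Density

variable {Ω : Type*} [MeasurableSpace Ω] {P : Measure Ω} {δ : Ω → ℝ}

theorem integrable_withDensity_ofReal_iff (hδ : Measurable δ) (hpos : ∀ ω, 0 ≤ δ ω) {u : Ω → ℝ} :
    Integrable u (P.withDensity fun ω => ENNReal.ofReal (δ ω)) ↔
      Integrable (fun ω => u ω * δ ω) P := by
  rw [integrable_withDensity_iff (by fun_prop) (by simp)]
  simp [hpos]

theorem integral_withDensity_ofReal (hδ : Measurable δ) (hpos : ∀ ω, 0 ≤ δ ω) (u : Ω → ℝ) :
    ∫ ω, u ω ∂(P.withDensity fun ω => ENNReal.ofReal (δ ω)) = ∫ ω, u ω * δ ω ∂P := by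
  rw [integral_withDensity_eq_integral_toReal_smul (by fun_prop) (by simp)]
  simp [hpos, mul_comm]

end Density

section Duality

variable {Ω : Type*} [m0 : MeasurableSpace Ω] {P : Measure Ω} {N J R T : ℕ}
  {F : Fin N → ℕ → MeasurableSpace Ω} {assets : Fin N → Finset (Fin J)}
  {X : Fin J → ℕ → Ω → ℝ} {Ys : Fin R → Fin N → Ω → ℝ} {φ : Fin N → Ω → ℝ} {o : Fin N}

theorem integral_exchange_eq_zero {Q : Fin N → Measure Ω}
    (hQ : Q ∈ MeY P F T assets X (spanExch Ys)) {y : Fin N → Ω → ℝ} (hy : y ∈ spanExch Ys) :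
    ∑ i, ∫ ω, y i ω ∂Q i = 0 := by
  refine le_antisymm (hQ.2.2 y hy) ?_
  have := hQ.2.2 _ (smul_mem_spanExch (-1) hy)
  simp only [Pi.smul_apply, smul_eq_mul, neg_mul, one_mul, integral_neg,
    Finset.sum_neg_distrib] at this
  linarith

theorem integrable_liftPrice {Q : Fin N → Measure Ω}
    (hQ : Q ∈ MeY P F T assets X (spanExch Ys)) (j : Fin J) {t : ℕ} (ht : t ≤ T) :
    Integrable (liftPrice assets X j t) (liftMeasure Q) := by
  rw [integrable_liftMeasure_iff]
  intro i
  by_cases hj : j ∈ assets i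
  · simpa [liftPrice, hj] using ((hQ.1 i).2.2.2 j hj).1 t ht
  · simp [liftPrice, hj]

theorem integrable_of_mem_marketList {Q : Fin N → Measure Ω}
    (hQ : Q ∈ MeY P F T assets X (spanExch Ys))
    {a : MeasurableSpace (Fin N × Ω) × (Fin N × Ω → ℝ)} (ha : a ∈ marketList F T assets X Ys o) :
    Integrable a.2 (liftMeasure Q) := by
  obtain ⟨i, rfl⟩ | ⟨r, rfl⟩ | ⟨s, hs, j, rfl⟩ := mem_marketList_iff.1 ha
  · exact integrable_liftMeasure_iff.2 (hQ.2.1 _ (transfer_mem_spanExch i))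
  · exact integrable_liftMeasure_iff.2 (hQ.2.1 _ (exchange_mem_spanExch r))
  · exact (integrable_liftPrice hQ j hs).sub (integrable_liftPrice hQ j hs.le)

theorem integral_mul_eq_zero_of_mem_marketList (hFle : ∀ i t, F i t ≤ m0)
    {Q : Fin N → Measure Ω} (hQ : Q ∈ MeY P F T assets X (spanExch Ys))
    {a : MeasurableSpace (Fin N × Ω) × (Fin N × Ω → ℝ)} (ha : a ∈ marketList F T assets X Ys o)
    {h : Fin N × Ω → ℝ} (hh : Measurable[a.1] h) (hhb : ∃ c, ∀ p, |h p| ≤ c) :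
    ∫ p, h p * a.2 p ∂liftMeasure Q = 0 := by
  have hint := integrable_of_mem_marketList hQ ha
  obtain ⟨c, hc⟩ := hhb
  obtain ⟨i, rfl⟩ | ⟨r, rfl⟩ | ⟨s, hs, j, rfl⟩ := mem_marketList_iff.1 ha
  · obtain ⟨c, rfl⟩ := eq_const_of_measurable_bot hh
    rw [integral_const_mul, integral_liftMeasure hint,
      integral_exchange_eq_zero hQ (transfer_mem_spanExch i), mul_zero]
  · obtain ⟨c, rfl⟩ := eq_const_of_measurable_bot hh
    rw [integral_const_mul, integral_liftMeasure hint,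
      integral_exchange_eq_zero hQ (exchange_mem_spanExch r), mul_zero]
  · have hhm := hh.mono (liftSpace_le fun i => hFle i s) le_rfl
    rw [integral_liftMeasure (hint.bdd_mul hhm.aestronglyMeasurable (Eventually.of_forall hc))]
    refine Finset.sum_eq_zero fun i _ => ?_
    obtain ⟨hprob, -, -, hmart⟩ := hQ.1 i
    by_cases hj : j ∈ assets i
    · obtain ⟨hi, hce⟩ := hmart j hj
      simpa [liftPrice, hj] using integral_mul_sub_eq_zero_of_condExp (hFle i s) (hi s hs.le)
        (hi (s + 1) hs) (hce s (s + 1) s.le_succ hs) (measurable_liftSpace_iff.1 hh i)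
        ⟨c, fun ω => hc (i, ω)⟩
    · simp [liftPrice, hj]

/-- Weak duality: collective martingale measures charge dominated claims nonpositively. -/
theorem sum_integral_nonpos (hN : 1 ≤ N) (hF : ∀ i, Monotone (F i)) (hFle : ∀ i t, F i t ≤ m0)
    {Q : Fin N → Measure Ω} (hQ : Q ∈ MeY P F T assets X (spanExch Ys)) {g : Fin N × Ω → ℝ}
    (hg : ∀ i, Integrable (fun ω => g (i, ω)) (Q i))
    (hgK : g ∈ Dominated (liftMeasure fun _ => P) (collectiveGains F T assets X Ys)) :
    ∑ i, ∫ ω, g (i, ω) ∂Q i ≤ 0 := by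
  have hg' := integrable_liftMeasure_iff.2 hg
  rw [← integral_liftMeasure hg']
  obtain ⟨k, hk, hgk⟩ := hgK
  refine integral_nonpos_of_dominated (l := marketList F T assets X Ys ⟨0, hN⟩)
    (pairwise_marketList hF) (fun a ha => ?_) (fun a ha => integrable_of_mem_marketList hQ ha)
    (fun a ha h hh hhb => integral_mul_eq_zero_of_mem_marketList hFle hQ ha hh hhb) hg'
    ⟨k, gains_marketList.symm ▸ hk, ?_⟩
  · obtain ⟨i, rfl⟩ | ⟨r, rfl⟩ | ⟨s, hs, j, rfl⟩ := mem_marketList_iff.1 ha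
    · exact bot_le
    · exact bot_le
    · exact liftSpace_le fun i => hFle i s
  · exact ae_liftMeasure_iff.2 fun i => (hQ.1 i).2.1.ae_le (ae_liftMeasure_iff.1 hgk i)

theorem noArb_collectiveGains
    (hNCA : NCA P (fun i => gainsSet (F i) T (assets i) X) (spanExch Ys)) :
    NoArb (liftMeasure fun _ => P) (collectiveGains F T assets X Ys) := by
  rintro g ⟨k, hk, y, hy, h⟩ hg
  refine ae_liftMeasure_iff.2 fun i => ?_
  filter_upwards [hNCA k y hy hk (fun i => by simpa [h] using ae_liftMeasure_iff.1 hg i) i]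
    with ω hω
  simpa [h] using hω

/-- A density which is orthogonal to all collective gains of growth at most `b` defines, after
normalization, a collective martingale measure. -/
theorem exists_mem_MeYphi_of_density [IsProbabilityMeasure P] (hF : ∀ i, Monotone (F i))
    (hFle : ∀ i t, F i t ≤ m0)
    (hadapted : ∀ i, ∀ j ∈ assets i, ∀ t, t ≤ T → Measurable[F i t] (X j t))
    (hYs : ∀ r i, Measurable (Ys r i)) (hφ : ∀ i, Measurable (φ i))
    {b d : Fin N × Ω → ℝ} (hb1 : ∀ p, 1 ≤ b p) (hbφ : ∀ i ω, |φ i ω| ≤ b (i, ω))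
    (hbX : ∀ i, ∀ j ∈ assets i, ∀ t ≤ T, ∀ ω, |X j t ω| ≤ b (i, ω))
    (hbY : ∀ r i, ∀ᵐ ω ∂P, |Ys r i ω| ≤ b (i, ω))
    (hd : Measurable d) (hdpos : ∀ p, 0 < d p)
    (hbd : Integrable (fun p => b p * d p) (liftMeasure fun _ => P))
    (hzero : ∀ k ∈ collectiveGains F T assets X Ys, Measurable k →
      (∃ c, ∀ᵐ p ∂liftMeasure fun _ => P, |k p| ≤ c * b p) →
      ∫ p, k p * d p ∂liftMeasure (fun _ => P) = 0) (o : Fin N) :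
    ∃ α > 0, ∃ Q ∈ MeYphi P F T assets X (spanExch Ys) φ, ∀ i, ∀ u : Ω → ℝ,
      ∫ ω, u ω ∂Q i = α⁻¹ * ∫ ω, u ω * d (i, ω) ∂P := by
  have hdi : ∀ i, Measurable fun ω => d (i, ω) := fun i => hd.comp measurable_prodMk_left
  have hgrow : ∀ i, ∀ u : Ω → ℝ, Measurable u → (∃ c, ∀ᵐ ω ∂P, |u ω| ≤ c * b (i, ω)) →
      Integrable (fun ω => u ω * d (i, ω)) P := by
    rintro i u hu ⟨c, hc⟩
    refine ((integrable_liftMeasure_iff.1 hbd i).const_mul c).mono'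
      (hu.mul (hdi i)).aestronglyMeasurable ?_
    filter_upwards [hc] with ω hω
    rw [norm_mul, Real.norm_eq_abs, Real.norm_of_nonneg (hdpos _).le, ← mul_assoc]
    exact mul_le_mul_of_nonneg_right hω (hdpos _).le
  have hsum : ∀ k ∈ collectiveGains F T assets X Ys, (∀ i, Measurable fun ω => k (i, ω)) →
      (∃ c, ∀ i, ∀ᵐ ω ∂P, |k (i, ω)| ≤ c * b (i, ω)) →
      ∑ i, ∫ ω, k (i, ω) * d (i, ω) ∂P = 0 := by
    rintro k hk hkm ⟨c, hc⟩
    rw [← integral_liftMeasure (Q := fun _ => P) (h := fun p => k p * d p)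
      (integrable_liftMeasure_iff.2 fun i => hgrow i _ (hkm i) ⟨c, hc i⟩)]
    exact hzero k hk (measurable_from_prod_countable_right hkm) ⟨c, ae_liftMeasure_iff.2 hc⟩
  have hexch : ∀ y ∈ spanExch Ys, (∀ i, Measurable (y i)) ∧
      ∃ c, ∀ i, ∀ᵐ ω ∂P, |y i ω| ≤ c * b (i, ω) := by
    rintro y ⟨x, c, -, hy⟩
    refine ⟨fun i => ?_, ∑ i, |x i| + ∑ r, |c r|, fun i => ?_⟩
    · rw [hy]
      exact measurable_const.add
        (Finset.measurable_fun_sum _ fun r _ => (hYs r i).const_mul (c r))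
    · filter_upwards [ae_all_iff.2 fun r => hbY r i] with ω hω
      have h0 : 0 ≤ b (i, ω) := zero_le_one.trans (hb1 _)
      have h1 : |x i| ≤ (∑ i, |x i|) * b (i, ω) :=
        (Finset.single_le_sum (f := fun i => |x i|) (fun i _ => abs_nonneg _)
          (Finset.mem_univ i)).trans
          (le_mul_of_one_le_right (Finset.sum_nonneg fun i _ => abs_nonneg _) (hb1 _))
      have h2 : |∑ r, c r * Ys r i ω| ≤ (∑ r, |c r|) * b (i, ω) := by
        rw [Finset.sum_mul]
        refine (Finset.abs_sum_le_sum_abs _ _).trans (Finset.sum_le_sum fun r _ => ?_)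
        rw [abs_mul]
        exact mul_le_mul_of_nonneg_left (hω r) (abs_nonneg _)
      rw [hy, add_mul]
      exact (abs_add_le _ _).trans (add_le_add h1 h2)
  set α := ∫ ω, d (o, ω) ∂P with hα
  have hint : ∀ i, Integrable (fun ω => d (i, ω)) P := fun i => by
    simpa using hgrow i 1 measurable_one ⟨1, Eventually.of_forall fun ω => by simpa using hb1 _⟩
  have hαpos : 0 < α := by
    rw [hα, integral_pos_iff_support_of_nonneg (fun ω => (hdpos _).le) (hint o)]
    have : (Function.support fun ω => d (o, ω)) = Set.univ := by
      ext ω; simpa using (hdpos (o, ω)).ne'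
    simp [this]
  have hmass : ∀ i, ∫ ω, d (i, ω) ∂P = α := by
    intro i
    obtain ⟨hm, hc⟩ := hexch _ (transfer_mem_spanExch (o := o) i)
    have h := hsum _ (mem_collectiveGains_of_mem_spanExch (transfer_mem_spanExch (o := o) i)) hm hc
    simp only [transfer, integral_const_mul] at h
    simp only [sub_mul, Finset.sum_sub_distrib, Pi.single_apply, ite_mul, one_mul, zero_mul] at h
    simpa [sub_eq_zero] using h
  have hδm : ∀ i, Measurable fun ω => α⁻¹ * d (i, ω) := fun i => (hdi i).const_mul _
  have hδ : ∀ i ω, 0 ≤ α⁻¹ * d (i, ω) := fun i ω =>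
    mul_nonneg (inv_nonneg.2 hαpos.le) (hdpos _).le
  set Q : Fin N → Measure Ω := fun i => P.withDensity fun ω => ENNReal.ofReal (α⁻¹ * d (i, ω))
    with hQ
  have hQint : ∀ i, ∀ u : Ω → ℝ, ∫ ω, u ω ∂Q i = α⁻¹ * ∫ ω, u ω * d (i, ω) ∂P := by
    intro i u
    rw [hQ, integral_withDensity_ofReal (hδm i) (hδ i), ← integral_const_mul]
    exact integral_congr_ae (Eventually.of_forall fun ω => by ring)
  have hQgrow : ∀ i, ∀ u : Ω → ℝ, Measurable u → (∃ c, ∀ᵐ ω ∂P, |u ω| ≤ c * b (i, ω)) →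
      Integrable u (Q i) := by
    intro i u hu hc
    rw [hQ, integrable_withDensity_ofReal_iff (hδm i) (hδ i)]
    refine ((hgrow i u hu hc).const_mul α⁻¹).congr (Eventually.of_forall fun ω => ?_)
    ring
  have hprob : ∀ i, IsProbabilityMeasure (Q i) := by
    intro i
    have h := hQint i 1
    simp only [Pi.one_apply, one_mul, hmass, inv_mul_cancel₀ hαpos.ne', integral_const,
      smul_eq_mul, mul_one] at h
    exact ⟨(ENNReal.toReal_eq_one_iff _).1 h⟩
  refine ⟨α, hαpos, Q, ⟨⟨fun i => ⟨hprob i, withDensity_absolutelyContinuous _ _,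
    withDensity_absolutelyContinuous' (by fun_prop) (Eventually.of_forall fun ω => ?_),
    fun j hj => ?_⟩, fun y hy i => ?_, fun y hy => ?_⟩, fun i =>
    hQgrow i _ (hφ i) ⟨1, Eventually.of_forall fun ω => by simpa using hbφ i ω⟩⟩, hQint⟩
  · simpa using mul_pos (inv_pos.2 hαpos) (hdpos (i, ω))
  · have hXm : ∀ t ≤ T, Measurable (X j t) := fun t ht =>
      (hadapted i j hj t ht).mono (hFle i t) le_rfl
    have hXint : ∀ t ≤ T, Integrable (X j t) (Q i) := fun t ht =>
      hQgrow i _ (hXm t ht) ⟨1, Eventually.of_forall fun ω => by simpa using hbX i j hj t ht ω⟩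
    refine ⟨hXint, fun s t hst ht => ae_eq_condExp_of_forall_step (hF i) (hFle i)
      (hadapted i j hj) hXint (fun s hs A hA => ?_) hst ht⟩
    have hk := trade_mem_collectiveGains (F := F) (assets := assets) (X := X) (Ys := Ys) hs j
      (h := fun p => if p.1 = i then A.indicator 1 p.2 else 0) (by
        refine measurable_liftSpace_iff.2 fun i' => ?_
        by_cases hi : i' = i
        · subst hi
          simpa using measurable_indicator_one_real hA
        · simp [hi])
    have h := hsum _ hk (fun i' => ?_) ⟨2, fun i' => Eventually.of_forall fun ω => ?_⟩
    · rw [Finset.sum_eq_single_of_mem i (Finset.mem_univ i)] at h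
      · rw [hQint]
        simp only [Pi.mul_apply, Pi.sub_apply, liftPrice, hj, if_true] at h
        rw [h, mul_zero]
      · intro i' _ hi
        simp [hi]
    · by_cases hi : i' = i
      · subst hi
        simp only [Pi.mul_apply, Pi.sub_apply, liftPrice, hj, if_true]
        exact (measurable_indicator_one_real (hFle _ _ _ hA)).mul
          ((hXm (s + 1) hs).sub (hXm s hs.le))
      · simp [hi]
    · have h0 : 0 ≤ b (i', ω) := zero_le_one.trans (hb1 _)
      by_cases hi : i' = i
      · subst hi
        by_cases hω : ω ∈ A
        · simp only [Pi.mul_apply, Pi.sub_apply, liftPrice, hj, if_true, hω,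
            Set.indicator_of_mem, Pi.one_apply, one_mul, two_mul]
          exact (abs_sub _ _).trans
            (add_le_add (hbX i' j hj (s + 1) hs ω) (hbX i' j hj s hs.le ω))
        · simpa [hω] using h0
      · simpa [hi] using h0
  · obtain ⟨hm, c, hc⟩ := hexch y hy
    exact hQgrow i _ (hm i) ⟨c, hc i⟩
  · obtain ⟨hm, hc⟩ := hexch y hy
    have h := hsum _ (mem_collectiveGains_of_mem_spanExch hy) hm hc
    simp only [hQint, ← Finset.mul_sum]
    rw [h, mul_zero]

/-- A function dominating all the data of the market. -/
def growthBound (T : ℕ) (assets : Fin N → Finset (Fin J)) (X : Fin J → ℕ → Ω → ℝ)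
    (φ : Fin N → Ω → ℝ) : Fin N × Ω → ℝ :=
  fun p => 1 + |φ p.1 p.2| + ∑ j ∈ assets p.1, ∑ t ∈ Finset.range (T + 1), |X j t p.2|

/-- A claim of controlled growth which cannot be dominated by collective gains is charged
positively by some collective martingale measure. -/
theorem exists_mem_MeYphi_of_notMem_dominated [IsProbabilityMeasure P] (hN : 1 ≤ N)
    (hF : ∀ i, Monotone (F i)) (hFle : ∀ i t, F i t ≤ m0)
    (hadapted : ∀ i, ∀ j ∈ assets i, ∀ t, t ≤ T → Measurable[F i t] (X j t))
    (hYs : ∀ r i, Measurable (Ys r i)) (hφ : ∀ i, Measurable (φ i))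
    (hY : ∀ r i, ∀ᵐ ω ∂P, |Ys r i ω| ≤ φ i ω)
    (hNCA : NCA P (fun i => gainsSet (F i) T (assets i) X) (spanExch Ys))
    {g : Fin N × Ω → ℝ} (hg : ∀ i, Measurable fun ω => g (i, ω))
    (hgφ : ∃ c ≥ 0, ∀ i, ∀ᵐ ω ∂P, |g (i, ω)| ≤ c * (1 + |φ i ω|))
    (hgK : g ∉ Dominated (liftMeasure fun _ => P) (collectiveGains F T assets X Ys)) :
    ∃ Q ∈ MeYphi P F T assets X (spanExch Ys) φ, 0 < ∑ i, ∫ ω, g (i, ω) ∂Q i := by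
  set o : Fin N := ⟨0, hN⟩
  set μ : Measure (Fin N × Ω) := liftMeasure fun _ => P with hμ
  set b := growthBound T assets X φ with hb
  have hsum0 : ∀ i (ω : Ω), 0 ≤ ∑ j ∈ assets i, ∑ t ∈ Finset.range (T + 1), |X j t ω| :=
    fun i ω => Finset.sum_nonneg fun j _ => Finset.sum_nonneg fun t _ => abs_nonneg _
  have hbφ : ∀ i ω, 1 + |φ i ω| ≤ b (i, ω) := fun i ω => le_add_of_nonneg_right (hsum0 i ω)
  have hb1 : ∀ p, 1 ≤ b p := fun p =>
    (le_add_of_nonneg_right (abs_nonneg _)).trans (hbφ p.1 p.2)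
  have hbX : ∀ i, ∀ j ∈ assets i, ∀ t ≤ T, ∀ ω, |X j t ω| ≤ b (i, ω) := by
    intro i j hj t ht ω
    refine le_add_of_nonneg_of_le (by positivity) ?_
    refine le_trans ?_ (Finset.single_le_sum (fun j _ => Finset.sum_nonneg
      fun t _ => abs_nonneg (X j t ω)) hj)
    exact Finset.single_le_sum (f := fun t => |X j t ω|) (fun t _ => abs_nonneg _)
      (Finset.mem_range.2 (by lia))
  have hbm : Measurable b := by
    refine measurable_from_prod_countable_right fun i => ?_
    refine (measurable_const.add (hφ i).abs).add (Finset.measurable_fun_sum (assets i) fun j hj =>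
      Finset.measurable_fun_sum (Finset.range (T + 1)) fun t ht => ?_)
    exact ((hadapted i j hj t (by have := Finset.mem_range.1 ht; lia)).mono
      (hFle i t) le_rfl).abs
  have hNA : NoArb μ (collectiveGains F T assets X Ys) := noArb_collectiveGains hNCA
  have hcl : SeqClosed μ (collectiveGains F T assets X Ys) := by
    rw [← gains_marketList (o := o)] at hNA ⊢
    exact seqClosed_gains (pairwise_marketList hF) hNA
  have hgb : ∃ c, ∀ᵐ p ∂μ, |g p| ≤ c * b p := by
    obtain ⟨c, hc0, hc⟩ := hgφ
    refine ⟨c, ae_liftMeasure_iff.2 fun i => ?_⟩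
    filter_upwards [hc i] with ω hω
    exact hω.trans (mul_le_mul_of_nonneg_left (hbφ i ω) hc0)
  obtain ⟨d, hd, hdpos, hbd, hdK, hdg⟩ := exists_separating_density hcl hNA hbm hb1
    (measurable_from_prod_countable_right hg) hgb hgK
  obtain ⟨α, hα, Q, hQ, hQint⟩ := exists_mem_MeYphi_of_density hF hFle hadapted hYs hφ hb1
    (fun i ω => (le_add_of_nonneg_left zero_le_one).trans (hbφ i ω)) hbX
    (fun r i => by
      filter_upwards [hY r i] with ω hω
      exact hω.trans ((le_abs_self _).trans
        ((le_add_of_nonneg_left zero_le_one).trans (hbφ i ω))))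
    hd hdpos hbd (fun k hk hkm hkb => by
      refine le_antisymm (hdK k hkm hkb ⟨k, hk, EventuallyLE.rfl⟩) ?_
      have := hdK (-k) hkm.neg (by simpa using hkb) ⟨-k, neg_mem hk, EventuallyLE.rfl⟩
      simpa [integral_neg] using this) o
  refine ⟨Q, hQ, ?_⟩
  have hgd : Integrable (fun p => g p * d p) μ :=
    not_imp_comm.1 integral_undef hdg.ne'
  simp only [hQint, ← Finset.mul_sum]
  rw [integral_liftMeasure hgd] at hdg
  exact mul_pos (inv_pos.2 hα) hdg

theorem sub_mem_dominated_iff {f : Fin N → Ω → ℝ} {m : Fin N → ℝ} :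
    (fun p : Fin N × Ω => f p.1 p.2 - m p.1) ∈
        Dominated (liftMeasure fun _ => P) (collectiveGains F T assets X Ys) ↔
      ∃ k : Fin N → Ω → ℝ, (∀ i, k i ∈ gainsSet (F i) T (assets i) X) ∧ ∃ y ∈ spanExch Ys,
        ∀ i, ∀ᵐ ω ∂P, f i ω ≤ m i + k i ω + y i ω := by
  constructor
  · rintro ⟨g, ⟨k, hk, y, hy, h⟩, hg⟩
    refine ⟨k, hk, y, hy, fun i => ?_⟩
    filter_upwards [ae_liftMeasure_iff.1 hg i] with ω hω
    rw [h] at hω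
    linarith
  · rintro ⟨k, hk, y, hy, h⟩
    refine ⟨fun p => k p.1 p.2 + y p.1 p.2, ⟨k, hk, y, hy, fun _ _ => rfl⟩,
      ae_liftMeasure_iff.2 fun i => ?_⟩
    filter_upwards [h i] with ω hω
    show f i ω - m i ≤ k i ω + y i ω
    linarith

end Duality

/-- collective pricing-hedging duality (Theorem duality:R). -/
theorem collective_pricing_hedging_duality
    {Ω : Type*} [m0 : MeasurableSpace Ω]
    (P : Measure Ω) [IsProbabilityMeasure P]
    (T J N : ℕ) (hT : 1 ≤ T) (hJ : 1 ≤ J) (hN : 1 ≤ N)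
    (F : Fin N → ℕ → MeasurableSpace Ω)
    (hFmono : ∀ i, Monotone (F i))
    (hFle : ∀ i t, F i t ≤ m0)
    (hFzero : ∀ i, ∀ A : Set Ω, MeasurableSet[F i 0] A → P A = 0 ∨ P A = 1)
    (X : Fin J → ℕ → Ω → ℝ)
    (assets : Fin N → Finset (Fin J))
    (hassets : ∀ i, (assets i).Nonempty)
    (hcover : ∀ j, ∃ i, j ∈ assets i)
    (hadapted : ∀ i, ∀ j ∈ assets i, ∀ t, t ≤ T → Measurable[F i t] (X j t))
    (R : ℕ) (Ys : Fin R → Fin N → Ω → ℝ)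
    (hYsmeas : ∀ r i, Measurable[F i T] (Ys r i))
    (hNCA : NCA P (fun i => gainsSet (F i) T (assets i) X) (spanExch Ys))
    (f φ : Fin N → Ω → ℝ)
    (hfmeas : ∀ i, Measurable[F i T] (f i))
    (hφmeas : ∀ i, Measurable[F i T] (φ i))
    (hdom_f : ∀ i, ∀ᵐ ω ∂P, |f i ω| ≤ φ i ω)
    (hdom_Y : ∀ r, ∀ i, ∀ᵐ ω ∂P, |Ys r i ω| ≤ φ i ω) :
    (MeYphi P F T assets X (spanExch Ys) φ).Nonempty ∧
    rhoPlus P (fun i => gainsSet (F i) T (assets i) X) (spanExch Ys) f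
      = sSup ((fun Q : Fin N → Measure Ω => ((∑ i, ∫ ω, f i ω ∂(Q i) : ℝ) : EReal)) ''
          (MeYphi P F T assets X (spanExch Ys) φ)) ∧
    ⊥ < rhoPlus P (fun i => gainsSet (F i) T (assets i) X) (spanExch Ys) f ∧
    (rhoPlus P (fun i => gainsSet (F i) T (assets i) X) (spanExch Ys) f < ⊤ →
      rhoPlusAttained P (fun i => gainsSet (F i) T (assets i) X) (spanExch Ys) f) := by
  have hm : ∀ i (u : Ω → ℝ), Measurable[F i T] u → Measurable u := fun i u hu =>
    hu.mono (hFle i T) le_rfl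
  have hsep := fun {g : Fin N × Ω → ℝ} => exists_mem_MeYphi_of_notMem_dominated hN hFmono hFle
    hadapted (fun r i => hm i _ (hYsmeas r i)) (fun i => hm i _ (hφmeas i)) hdom_Y hNCA (g := g)
  have hfint : ∀ Q ∈ MeYphi P F T assets X (spanExch Ys) φ, ∀ i, Integrable (f i) (Q i) :=
    fun Q hQ i => (hQ.2 i).mono' (hm i _ (hfmeas i)).aestronglyMeasurable
      ((hQ.1.1 i).2.1.ae_le (hdom_f i))
  set ρ := rhoPlus P (fun i => gainsSet (F i) T (assets i) X) (spanExch Ys) f with hρ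
  set E : (Fin N → Measure Ω) → EReal := fun Q => ((∑ i, ∫ ω, f i ω ∂(Q i) : ℝ) : EReal) with hE
  have hne : (MeYphi P F T assets X (spanExch Ys) φ).Nonempty := by
    obtain ⟨Q, hQ, -⟩ := hsep (g := 1) (fun i => measurable_const) ⟨1, zero_le_one, fun i =>
      Eventually.of_forall fun ω => by simp⟩ (by
        rintro ⟨k, hk, hk1⟩
        have h0 := noArb_collectiveGains hNCA k hk
          (hk1.mono fun p hp => zero_le_one.trans hp)
        have := ae_liftMeasure_iff.1 (hk1.and h0) ⟨0, hN⟩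
        obtain ⟨ω, h1, h2⟩ := this.exists
        rw [h2] at h1
        exact absurd h1 (by simp))
    exact ⟨Q, hQ⟩
  have hweak : ∀ Q ∈ MeYphi P F T assets X (spanExch Ys) φ, E Q ≤ ρ := by
    intro Q hQ
    refine le_sInf ?_
    rintro _ ⟨m, rfl, hk⟩
    have hprob := fun i => (hQ.1.1 i).1
    have h := sum_integral_nonpos hN hFmono hFle hQ.1
      (fun i => (hfint Q hQ i).sub (integrable_const (m i))) (sub_mem_dominated_iff.2 hk)
    simp only [integral_sub (hfint Q hQ _) (integrable_const _), Finset.sum_sub_distrib,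
      integral_const, probReal_univ, one_smul, sub_nonpos] at h
    exact EReal.coe_le_coe_iff.2 h
  have hstrong : ∀ r : ℝ, (∀ Q ∈ MeYphi P F T assets X (spanExch Ys) φ, E Q ≤ r) →
      ∃ m : Fin N → ℝ, ∑ i, m i = r ∧
        ∃ k : Fin N → Ω → ℝ, (∀ i, k i ∈ gainsSet (F i) T (assets i) X) ∧ ∃ y ∈ spanExch Ys,
          ∀ i, ∀ᵐ ω ∂P, f i ω ≤ m i + k i ω + y i ω := by
    intro r hr
    set m : Fin N → ℝ := Pi.single ⟨0, hN⟩ r with hmdef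
    refine ⟨m, by simp [hmdef], sub_mem_dominated_iff.1 ?_⟩
    by_contra hcon
    obtain ⟨Q, hQ, hpos⟩ := hsep (fun i => (hm i _ (hfmeas i)).sub_const (m i))
      ⟨1 + |r|, by positivity, fun i => by
        filter_upwards [hdom_f i] with ω hω
        have h1 : |m i| ≤ |r| := by
          rw [hmdef, Pi.single_apply]
          split_ifs <;> simp
        have h2 := (abs_sub (f i ω) (m i)).trans (add_le_add (hω.trans (le_abs_self _)) h1)
        have h3 := mul_nonneg (abs_nonneg r) (abs_nonneg (φ i ω))
        show |f i ω - m i| ≤ _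
        linarith⟩ hcon
    have hprob := fun i => (hQ.1.1 i).1
    simp only [integral_sub (hfint Q hQ _) (integrable_const _), Finset.sum_sub_distrib,
      integral_const, probReal_univ, one_smul, sub_pos] at hpos
    have : ∑ i, ∫ ω, f i ω ∂Q i ≤ r := EReal.coe_le_coe_iff.1 (hr Q hQ)
    have hmr : ∑ i, m i = r := by simp [hmdef]
    linarith
  obtain ⟨Q0, hQ0⟩ := hne
  have hsup : ρ = sSup (E '' MeYphi P F T assets X (spanExch Ys) φ) := by
    refine le_antisymm (EReal.le_of_forall_lt_iff_le.1 fun r hr => ?_)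
      (sSup_le (by rintro _ ⟨Q, hQ, rfl⟩; exact hweak Q hQ))
    obtain ⟨m, hmr, hk⟩ := hstrong r fun Q hQ => (le_sSup (Set.mem_image_of_mem E hQ)).trans hr.le
    exact sInf_le ⟨m, by rw [hmr], hk⟩
  have hbot : ⊥ < ρ := (EReal.bot_lt_coe _).trans_le (hweak Q0 hQ0)
  refine ⟨⟨Q0, hQ0⟩, hsup, hbot, fun htop => ?_⟩
  lift ρ to ℝ using ⟨htop.ne, hbot.ne'⟩ with r
  obtain ⟨m, hmr, k, hk, y, hy, h⟩ := hstrong r hweak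
  exact ⟨m, k, y, hy, hk, h, by rw [hmr, hρ]⟩

end CollectiveArb
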